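/- arXiv:1611.08564 — 2 statements merged into one kernel-verified Lean document; each statement's English description precedes it below -/
import Mathlib

section
/- Let φ : ℕ → ℕ be a map and let (n_k), (m_k) and (t_k) be three φ-increasing sequences of positive integers. Then there exist a dense subset X₀ of H(ℂ) and three strictly increasing sequences (k_{0,s}), (k_{1,s}), (k_{2,s}) of positive integers such that for every b > 0, every θ ∈ (0, π) and every x ∈ X₀: (1) e^{bk} D^k x → 0 in H(ℂ) as k → ∞ along k ∈ 𝒩; (2) e^{bk} T_a^k x → 0 in H(ℂ) as k → ∞ along k ∈ ℳ, uniformly over a ∈ 𝕋 with a ∉ {e^{iα} : α ∈ (−θ, θ)}; (3) e^{bk} T_1^k x → 0 in H(ℂ) as k → ∞ along k ∈ 𝒯; where 𝒩 = ⋃_{s≥1} [n_{k_{0,s}}, n_{k_{0,s}} + φ(n_{k_{0,s}})], ℳ = ⋃_{s≥1} [m_{k_{1,s}}, m_{k_{1,s}} + φ(m_{k_{1,s}})] and 𝒯 = ⋃_{s≥1} [t_{k_{2,s}}, t_{k_{2,s}} + φ(t_{k_{2,s}})]. -/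
/-!
The dense set consists of the functions `p * x_i`, with `p` a polynomial and `x_i = ∏_{r ≥ i} g_r`
an infinite product of polynomials converging to `1` very fast on growing discs. At step `r` the
factor `g_r` is very close to `1` on a disc containing everything treated so far, and very close
to `0` on a cone, cut off far away, which contains the translates `z + k a` (for even `r`,
with the cone avoiding a narrowing neighbourhood of the positive half-line), or the translates
`z + k` (for odd `r`, with the cone a half-plane), for `k` in a new block and `|z| ≤ r`. Hence `x_i`
is super-exponentially small at these points, with enough room to absorb `p` and `e^{bk}`.

For the derivatives, the block `[n, n + φ(n)]` of step `r` is chosen beyond the degree of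
`p ∏_{i ≤ q < r} g_q`, and afterwards `g_r, g_{r+1}, …` are chosen so close to `1` that the
remainder `p (x_i - ∏_{i ≤ q < r} g_q)` is tiny on a large disc; Cauchy's estimate then bounds the
derivatives of order in the block (`norm_iterate_deriv_le`).

Density holds because `x_i → 1` locally uniformly and polynomials are dense. The factors exist by
Runge's theorem (`exists_poly_switch`), applied to the rational function `1 / (1 - (z / 2R) ^ N)`
on a disc together with a bounded piece of a cone; the required instance of Runge's theorem follows
from the invariance of the spectrum in a closed subalgebra when the resolvent set is connected.
-/

open Filter Metric Set

noncomputable def pnorm (j : ℝ) (f : ℂ → ℂ) : ℝ :=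
  sSup ((fun z => ‖f z‖) '' Metric.closedBall (0 : ℂ) j)

/-- Convergence in `H(ℂ)`, i.e. uniform convergence on every compact subset of `ℂ`. -/
def TendstoH (F : ℕ → ℂ → ℂ) (f : ℂ → ℂ) : Prop :=
  ∀ j : ℕ, 1 ≤ j → Filter.Tendsto (fun k => pnorm j (F k - f)) Filter.atTop (nhds 0)

/-- A set of entire functions is dense in `H(ℂ)`. -/
def DenseH (S : Set (ℂ → ℂ)) : Prop :=
  ∀ f : ℂ → ℂ, Differentiable ℂ f → ∀ j : ℕ, 1 ≤ j → ∀ ε : ℝ, 0 < ε →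
    ∃ g ∈ S, pnorm j (g - f) < ε

/-- A set of entire functions is (sequentially) closed in `H(ℂ)`. -/
def ClosedH (M : Set (ℂ → ℂ)) : Prop :=
  ∀ (F : ℕ → ℂ → ℂ) (f : ℂ → ℂ), (∀ k, F k ∈ M) → Differentiable ℂ f →
    TendstoH F f → f ∈ M

/-- The operator `μ D`, `f ↦ μ f'`. -/
noncomputable def derivOp (μ : ℂ) : (ℂ → ℂ) → ℂ → ℂ := fun f z => μ * deriv f z

/-- The operator `μ T_a`, `f ↦ μ f(· + a)`. -/
def transOp (μ a : ℂ) : (ℂ → ℂ) → ℂ → ℂ := fun f z => μ * f (z + a)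

/-- The translation operator `T_a`, `f ↦ f(· + a)`. -/
def translOp (a : ℂ) : (ℂ → ℂ) → ℂ → ℂ := fun f z => f (z + a)

/-- `f` has dense orbit under `S` in `H(ℂ)`. -/
def HypercyclicFor (S : (ℂ → ℂ) → ℂ → ℂ) (f : ℂ → ℂ) : Prop :=
  ∀ g : ℂ → ℂ, Differentiable ℂ g → ∀ j : ℕ, 1 ≤ j → ∀ ε : ℝ, 0 < ε →
    ∃ n : ℕ, pnorm j (S^[n] f - g) < ε

/-- `M` is a closed infinite-dimensional subspace of `H(ℂ)`. -/
def IsClosedInfDimSubspaceH (M : Submodule ℂ (ℂ → ℂ)) : Prop :=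
  (∀ f ∈ M, Differentiable ℂ f) ∧ ClosedH (M : Set (ℂ → ℂ)) ∧ ¬ FiniteDimensional ℂ M

/-- `a` does not belong to the arc `{e^{iα} : α ∈ (-θ, θ)}` of the unit circle. -/
def OutsideArc (θ : ℝ) (a : ℂ) : Prop :=
  ∀ α : ℝ, -θ < α → α < θ → a ≠ Complex.exp (α * Complex.I)

/-- A sequence `(n_k)_{k ≥ 1}` of positive integers is `φ`-increasing. -/
def PhiIncreasing (φ : ℕ → ℕ) (n : ℕ → ℕ) : Prop :=
  (∀ k, 1 ≤ k → 1 ≤ n k) ∧ ∀ k, 1 ≤ k → n k + φ (n k) < n (k + 1)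

/-- `q` is a continuous seminorm on `H(ℂ)`. -/
def IsContinuousSeminormH (q : (ℂ → ℂ) → ℝ) : Prop :=
  (∀ f g : ℂ → ℂ, Differentiable ℂ f → Differentiable ℂ g → q (f + g) ≤ q f + q g) ∧
  (∀ (c : ℂ) (f : ℂ → ℂ), Differentiable ℂ f → q (c • f) = ‖c‖ * q f) ∧
  (∃ (C : ℝ) (i : ℕ), 0 < C ∧ 1 ≤ i ∧ ∀ f : ℂ → ℂ, Differentiable ℂ f → q f ≤ C * pnorm i f)

/-- `q` is a continuous norm on `H(ℂ)`. -/
def IsContinuousNormH (q : (ℂ → ℂ) → ℝ) : Prop :=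
  IsContinuousSeminormH q ∧ ∀ f : ℂ → ℂ, Differentiable ℂ f → q f = 0 → f = 0

/-! ### Polynomials that are near `1` on a disc and near `0` on a far piece of a cone -/

/-- The complement of the union of the disc of radius `R` with a piece of the cone `C` in the
annulus `4R ≤ |z| ≤ L` is connected: every point outside is joined to a large circle either along
a ray, or along its own circle `|z| = r < 4R` followed by the ray through `u₀ ∉ C`. -/
lemma isPreconnected_compl_keyhole (C : Set ℂ) (hC : ∀ z : ℂ, ∀ t : ℝ, 0 < t → (t : ℂ) * z ∈ C → z ∈ C)
    (u₀ : ℂ) (hu : ‖u₀‖ = 1) (hu₀ : u₀ ∉ C) (R L : ℝ) (hR : 0 < R) :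
    IsPreconnected ((closedBall (0 : ℂ) R ∪ (C ∩ {z | 4 * R ≤ ‖z‖ ∧ ‖z‖ ≤ L}))ᶜ) := by
  set M : ℝ := max (4 * R) L + 1 with hM
  have hM1 : 4 * R < M := by rw [hM]; linarith [le_max_left (4 * R) L]
  have hM2 : L < M := by rw [hM]; linarith [le_max_right (4 * R) L]
  have hrank : 1 < Module.rank ℝ ℂ := by
    rw [Complex.rank_real_complex]; norm_num
  have hsph (r : ℝ) : IsPreconnected (sphere (0 : ℂ) r) := isPreconnected_sphere hrank 0 r
  have hray (u : ℂ) (a : ℝ) : IsPreconnected ((fun t : ℝ => (t : ℂ) * u) '' Ioi a) :=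
    isPreconnected_Ioi.image _ (by fun_prop)
  -- Since `C` is a cone, a ray avoids the compact set if its direction is not in `C`, or if it
  -- starts beyond the radius `L`.
  have hout : ∀ u : ℂ, ‖u‖ = 1 → ∀ a : ℝ, R ≤ a → (u ∉ C ∨ L ≤ a) →
      (fun t : ℝ => (t : ℂ) * u) '' Ioi a ⊆
        (closedBall (0 : ℂ) R ∪ (C ∩ {z | 4 * R ≤ ‖z‖ ∧ ‖z‖ ≤ L}))ᶜ := by
    rintro u hu a ha h _ ⟨t, ht, rfl⟩
    have ht' : a < t := ht
    have ht0 : 0 < t := by linarith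
    have hn : ‖(t : ℂ) * u‖ = t := by simp [hu, abs_of_pos ht0]
    rintro (h1 | ⟨h1, -, h2⟩)
    · rw [mem_closedBall_zero_iff, hn] at h1; linarith
    · rw [hn] at h2
      rcases h with h | h
      · exact h (hC u t ht0 h1)
      · linarith
  have hS : sphere (0 : ℂ) M ⊆ (closedBall (0 : ℂ) R ∪ (C ∩ {z | 4 * R ≤ ‖z‖ ∧ ‖z‖ ≤ L}))ᶜ := by
    intro z hz
    rw [mem_sphere_zero_iff_norm] at hz
    rintro (h1 | ⟨-, -, h2⟩)
    · rw [mem_closedBall_zero_iff] at h1; linarith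
    · linarith
  have hMu : ∀ u : ℂ, ‖u‖ = 1 → (M : ℂ) * u ∈ sphere (0 : ℂ) M := by
    intro u hu
    simp [hu, abs_of_pos (show 0 < M by linarith)]
  refine isPreconnected_of_forall ((M : ℂ) * u₀) fun y hy => ?_
  have hyR : R < ‖y‖ := by
    by_contra! h
    exact hy (Or.inl (by simpa using h))
  have hy0 : (‖y‖ : ℂ) ≠ 0 := by
    have : ‖y‖ ≠ 0 := by linarith
    exact_mod_cast this
  set u : ℂ := y / ‖y‖ with hudef
  have hu1 : ‖u‖ = 1 := by
    have : ‖y‖ ≠ 0 := by linarith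
    simp [hudef, this]
  have hyu : (‖y‖ : ℂ) * u = y := by rw [hudef]; field_simp
  by_cases hcase : R < ‖y‖ ∧ ‖y‖ < 4 * R
  · refine ⟨sphere 0 ‖y‖ ∪ ((fun t : ℝ => (t : ℂ) * u₀) '' Ioi R), ?_, ?_, ?_, ?_⟩
    · refine union_subset ?_ (hout u₀ hu R le_rfl (Or.inl hu₀))
      intro z hz
      rw [mem_sphere_zero_iff_norm] at hz
      rintro (h1 | ⟨-, h2, -⟩)
      · rw [mem_closedBall_zero_iff] at h1; linarith
      · linarith
    · exact Or.inr ⟨M, by rw [mem_Ioi]; linarith, rfl⟩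
    · exact Or.inl (by simp)
    · refine (hsph _).union ((‖y‖ : ℂ) * u₀) ?_ ⟨‖y‖, hyR, rfl⟩ (hray u₀ R)
      simp [hu]
  · have : ∃ a, R ≤ a ∧ a < ‖y‖ ∧ a < M ∧ (u ∉ C ∨ L ≤ a) := by
      by_cases huC : u ∈ C
      · have hLy : L < ‖y‖ := by
          by_contra! h
          refine hy (Or.inr ⟨?_, ?_, h⟩)
          · refine hC y ‖y‖⁻¹ (inv_pos.mpr (by linarith)) ?_
            have : ((‖y‖⁻¹ : ℝ) : ℂ) * y = u := by rw [hudef]; push_cast; ring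
            rwa [this]
          · by_contra! h'; exact hcase ⟨hyR, h'⟩
        exact ⟨max R L, le_max_left _ _, max_lt hyR hLy, max_lt (by linarith) hM2,
          Or.inr (le_max_right _ _)⟩
      · exact ⟨R, le_rfl, hyR, by linarith, Or.inl huC⟩
    obtain ⟨a, ha, hay, haM, hor⟩ := this
    refine ⟨sphere 0 M ∪ ((fun t : ℝ => (t : ℂ) * u) '' Ioi a), ?_, ?_, ?_, ?_⟩
    · exact union_subset hS (hout u hu1 a ha hor)
    · exact Or.inl (hMu u₀ hu)
    · exact Or.inr ⟨‖y‖, hay, hyu⟩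
    · exact (hsph _).union _ (hMu u hu1) ⟨M, haM, rfl⟩ (hray u a)

open Polynomial in
/-- A case of Runge's theorem: if `K` is compact with connected complement and the polynomial `P`
has no zero on `K`, then `1 / P` is a uniform limit of polynomials on `K`. In `C(K, ℂ)` the
coordinate function has spectrum `K`; since `Kᶜ` is connected, its spectrum in the closed
subalgebra it generates is still `K`, so by spectral mapping `P` is invertible in that
subalgebra. -/
lemma exists_poly_inv_approx (K : Set ℂ) (hK : IsCompact K) (hKc : IsPreconnected Kᶜ)
    (P : ℂ[X]) (hP : ∀ z ∈ K, P.eval z ≠ 0) (ε : ℝ) (hε : 0 < ε) :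
    ∃ g : ℂ[X], ∀ z ∈ K, ‖g.eval z - (P.eval z)⁻¹‖ ≤ ε := by
  rcases K.eq_empty_or_nonempty with rfl | hne
  · exact ⟨0, by simp⟩
  have : CompactSpace K := isCompact_iff_compactSpace.mp hK
  have : Nonempty K := hne.to_subtype
  let ι : C(K, ℂ) := ⟨Subtype.val, continuous_subtype_val⟩
  let S : Subalgebra ℂ C(K, ℂ) := Algebra.elemental ℂ ι
  have : IsClosed (S : Set C(K, ℂ)) := Algebra.elemental.isClosed ℂ ι
  have : CompleteSpace S := IsClosed.completeSpace_coe (s := (S : Set C(K, ℂ)))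
  let x : S := ⟨ι, Algebra.elemental.self_mem ℂ ι⟩
  have hspec : spectrum ℂ ι = K := by
    rw [ContinuousMap.spectrum_eq_range]; exact Subtype.range_coe
  have hx : spectrum ℂ x = K := by
    have h := Subalgebra.spectrum_eq_of_isPreconnected_compl (𝕜 := ℂ) S x (by
      change IsPreconnected (spectrum ℂ ι)ᶜ
      rwa [hspec])
    rw [h]; exact hspec
  have h0 : (0 : ℂ) ∉ spectrum ℂ (aeval x P) := by
    rw [spectrum.map_polynomial_aeval, hx]
    rintro ⟨z, hz, h⟩
    exact hP z hz h
  rw [spectrum.zero_notMem_iff] at h0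
  obtain ⟨y, hy⟩ := h0.exists_right_inv
  have hae : ∀ Q : ℂ[X], ∀ z : K, (aeval ι Q : C(K, ℂ)) z = Q.eval (z : ℂ) := by
    intro Q z
    rw [Polynomial.aeval_continuousMap_apply]
    simp [ι]
  have hy' : ∀ z : K, (y : C(K, ℂ)) z = (P.eval (z : ℂ))⁻¹ := by
    intro z
    have h1 : (aeval ι P : C(K, ℂ)) * (y : C(K, ℂ)) = 1 := by
      have := congrArg (S.val) hy
      rw [map_mul, map_one, ← Polynomial.aeval_algHom_apply] at this
      exact this
    have h2 := congrArg (fun f : C(K, ℂ) => f z) h1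
    simp only [ContinuousMap.mul_apply, ContinuousMap.one_apply, hae] at h2
    exact eq_inv_of_mul_eq_one_right h2
  have hmem : (y : C(K, ℂ)) ∈ closure ((Algebra.adjoin ℂ {ι} : Subalgebra ℂ C(K, ℂ)) : Set C(K, ℂ)) :=
    y.2
  obtain ⟨v, hv, hd⟩ := Metric.mem_closure_iff.mp hmem ε hε
  rw [SetLike.mem_coe, Algebra.adjoin_singleton_eq_range_aeval] at hv
  obtain ⟨g, rfl⟩ := hv
  refine ⟨g, fun z hz => ?_⟩
  have := (ContinuousMap.dist_apply_le_dist (f := (y : C(K, ℂ))) (g := aeval ι g) ⟨z, hz⟩).trans hd.le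
  rw [hy', dist_comm, dist_eq_norm] at this
  rw [← hae g ⟨z, hz⟩]
  exact this

open Polynomial in
/-- A polynomial close to `1` on the disc of radius `R` and close to `0` on the cone `C` between
the radii `4R` and `L`. It approximates `1 / (1 - (z / 2R) ^ N)` with `N` large. -/
lemma exists_poly_switch (C : Set ℂ) (hCc : IsClosed C)
    (hC : ∀ z : ℂ, ∀ t : ℝ, 0 < t → (t : ℂ) * z ∈ C → z ∈ C)
    (u₀ : ℂ) (hu : ‖u₀‖ = 1) (hu₀ : u₀ ∉ C) (R L : ℝ) (hR : 0 < R) (ε : ℝ) (hε : 0 < ε) :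
    ∃ g : ℂ[X], (∀ z : ℂ, ‖z‖ ≤ R → ‖g.eval z - 1‖ ≤ ε) ∧
      ∀ z ∈ C, 4 * R ≤ ‖z‖ → ‖z‖ ≤ L → ‖g.eval z‖ ≤ ε := by
  obtain ⟨N, hN⟩ := exists_pow_lt_of_lt_one (show 0 < min (ε / 4) (1 / 2) by positivity)
    (show (1 / 2 : ℝ) < 1 by norm_num)
  set δ : ℝ := (1 / 2) ^ N with hδ
  have hδ0 : 0 < δ := by positivity
  have hδ1 : δ < ε / 4 := hN.trans_le (min_le_left _ _)
  have hδ2 : δ < 1 / 2 := hN.trans_le (min_le_right _ _)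
  let P : ℂ[X] := 1 - (Polynomial.C ((1 / (2 * R) : ℝ) : ℂ) * X) ^ N
  have hP : ∀ z, P.eval z = 1 - (((1 / (2 * R) : ℝ) : ℂ) * z) ^ N := by intro z; simp [P]
  have hw : ∀ z : ℂ, ‖(((1 / (2 * R) : ℝ) : ℂ) * z) ^ N‖ = (1 / (2 * R) * ‖z‖) ^ N := by
    intro z
    rw [norm_pow, norm_mul, Complex.norm_real, Real.norm_of_nonneg (by positivity)]
  have hin : ∀ z : ℂ, ‖z‖ ≤ R → P.eval z ≠ 0 ∧ ‖(P.eval z)⁻¹ - 1‖ ≤ ε / 2 := by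
    intro z hz
    have h1 : ‖(((1 / (2 * R) : ℝ) : ℂ) * z) ^ N‖ ≤ δ := by
      rw [hw]
      refine pow_le_pow_left₀ (by positivity) ?_ N
      rw [one_div, inv_mul_le_iff₀ (by positivity)]; linarith
    rw [hP]
    generalize (((1 / (2 * R) : ℝ) : ℂ) * z) ^ N = w at h1
    have h2 : 1 / 2 ≤ ‖1 - w‖ := by
      have := norm_sub_norm_le (1 : ℂ) w
      rw [norm_one] at this; linarith
    have h3 : 1 - w ≠ 0 := by
      intro h; rw [h, norm_zero] at h2; linarith
    refine ⟨h3, ?_⟩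
    have : (1 - w)⁻¹ - 1 = w / (1 - w) := by field_simp; ring
    rw [this, norm_div, div_le_iff₀ (by linarith)]
    nlinarith
  have hout : ∀ z : ℂ, 4 * R ≤ ‖z‖ → P.eval z ≠ 0 ∧ ‖(P.eval z)⁻¹‖ ≤ ε / 2 := by
    intro z hz
    have h1 : δ⁻¹ ≤ ‖(((1 / (2 * R) : ℝ) : ℂ) * z) ^ N‖ := by
      rw [hw, hδ, ← inv_pow]
      refine pow_le_pow_left₀ (by positivity) ?_ N
      rw [one_div, one_div, inv_inv, inv_mul_eq_div, le_div_iff₀ (by positivity)]; linarith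
    rw [hP]
    generalize (((1 / (2 * R) : ℝ) : ℂ) * z) ^ N = w at h1
    have h4 : 2 ≤ δ⁻¹ := by
      rw [le_inv_comm₀ (by norm_num) hδ0]; linarith
    have h2 : δ⁻¹ / 2 ≤ ‖1 - w‖ := by
      have := norm_sub_norm_le w (1 : ℂ)
      rw [norm_one, norm_sub_rev] at this; linarith
    have h3 : 1 - w ≠ 0 := by
      intro h; rw [h, norm_zero] at h2; linarith
    refine ⟨h3, ?_⟩
    rw [norm_inv]
    calc ‖1 - w‖⁻¹ ≤ (δ⁻¹ / 2)⁻¹ := inv_anti₀ (by positivity) h2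
      _ = 2 * δ := by field_simp
      _ ≤ ε / 2 := by linarith
  have hKc := isPreconnected_compl_keyhole C hC u₀ hu hu₀ R L hR
  have hK : IsCompact (closedBall (0 : ℂ) R ∪ (C ∩ {z | 4 * R ≤ ‖z‖ ∧ ‖z‖ ≤ L})) := by
    refine (isCompact_closedBall _ _).union ?_
    refine (isCompact_closedBall (0 : ℂ) L).of_isClosed_subset ?_ ?_
    · refine hCc.inter (IsClosed.and ?_ ?_)
      · exact isClosed_le continuous_const continuous_norm
      · exact isClosed_le continuous_norm continuous_const
    · rintro z ⟨-, -, h⟩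
      simpa using h
  obtain ⟨g, hg⟩ := exists_poly_inv_approx _ hK hKc P (by
    rintro z (hz | ⟨-, hz, -⟩)
    · exact (hin z (by simpa using hz)).1
    · exact (hout z hz).1) (ε / 2) (by positivity)
  refine ⟨g, fun z hz => ?_, fun z hzC hz1 hz2 => ?_⟩
  · have h1 := hg z (Or.inl (by simpa using hz))
    have h2 := (hin z hz).2
    calc ‖g.eval z - 1‖ = ‖(g.eval z - (P.eval z)⁻¹) + ((P.eval z)⁻¹ - 1)‖ := by congr 1; ring
      _ ≤ _ := norm_add_le _ _
      _ ≤ ε := by linarith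
  · have h1 := hg z (Or.inr ⟨hzC, hz1, hz2⟩)
    have h2 := (hout z hz1).2
    calc ‖g.eval z‖ = ‖(g.eval z - (P.eval z)⁻¹) + (P.eval z)⁻¹‖ := by congr 1; ring
      _ ≤ _ := norm_add_le _ _
      _ ≤ ε := by linarith

/-! ### Inductive construction of the infinite products -/

open Polynomial in
lemma exists_poly_list_bound (l : List ℂ[X]) (ρ : ℝ) :
    ∃ B : ℝ, 1 ≤ B ∧ ∃ D : ℕ, ∀ P ∈ l, P.natDegree ≤ D ∧ ∀ z : ℂ, ‖z‖ ≤ ρ → ‖P.eval z‖ ≤ B := by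
  induction l with
  | nil => exact ⟨1, le_rfl, 0, by simp⟩
  | cons P l ih =>
    obtain ⟨B, hB, D, h⟩ := ih
    obtain ⟨c, hc⟩ := (isCompact_closedBall (0 : ℂ) ρ).exists_bound_of_continuousOn
      (P.continuous.continuousOn)
    refine ⟨max B c, hB.trans (le_max_left _ _), max D P.natDegree, ?_⟩
    intro Q hQ
    rcases List.mem_cons.mp hQ with rfl | hQ
    · exact ⟨le_max_right _ _, fun z hz => (hc z (by simpa using hz)).trans (le_max_right _ _)⟩
    · exact ⟨(h Q hQ).1.trans (le_max_left _ _),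
        fun z hz => ((h Q hQ).2 z hz).trans (le_max_left _ _)⟩

open Polynomial in
/-- The data available at one stage of the inductive construction: the partial products built so
far (`polys`), the last indices used in the two kinds of sequences (`κ` for the translation
blocks, `ν` for the derivative blocks), a radius `R` containing all earlier regions, and the
tolerance `τ` allowed for all later modifications. -/
structure Stage where
  polys : List ℂ[X]
  κ : ℕ
  ν : ℕ
  R : ℝ
  τ : ℝ

/-- The radius and the tolerance of a stage are positive. -/
def Stage.Good (S : Stage) : Prop := 0 < S.R ∧ 0 < S.τ

open Polynomial in
/-- `S'` is obtained from `S` at step `s` with the new factor `g`. With `N = n_ν + φ(n_ν)` the end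
of the new derivative block and `L = ℓ_κ + φ(ℓ_κ) + s` the outer radius of the new translation
region, the factor `g` is so close to `1` on the disc of radius `S.R` that every partial product
changes there by at most `e^{-sN} / N!`, and so small on the part of the cone `C` with
`ℓ_κ - s ≤ |z| ≤ L` that every new partial product is at most `e^{-sL}` there. The derivative
block lies beyond the degrees of the old partial products. -/
structure Stage.Next (φ n ℓ : ℕ → ℕ) (C : Set ℂ) (s : ℕ) (S S' : Stage) (g : ℂ[X]) : Prop where
  polys_eq : S'.polys = 1 :: S.polys.map (· * g)
  κ_lt : S.κ < S'.κ
  ν_lt : S.ν < S'.ν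
  R_le : S.R + 1 ≤ S'.R
  τ_le : S'.τ ≤ S.τ / 2
  degree_lt : ∀ P ∈ S.polys, P.natDegree + s < n S'.ν
  near_one : ∀ P ∈ S.polys, ∀ z : ℂ, ‖z‖ ≤ S.R → ‖P.eval z * (g.eval z - 1)‖ ≤
    min S.τ (Real.exp (-(s * (n S'.ν + φ (n S'.ν) : ℕ))) / (n S'.ν + φ (n S'.ν)).factorial)
  τ_le_deriv :
    S'.τ ≤ Real.exp (-(s * (n S'.ν + φ (n S'.ν) : ℕ))) / (n S'.ν + φ (n S'.ν)).factorial
  small : ∀ P ∈ S.polys, ∀ z ∈ C, (ℓ S'.κ : ℝ) - s ≤ ‖z‖ →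
    ‖z‖ ≤ (ℓ S'.κ + φ (ℓ S'.κ) + s : ℕ) →
    ‖P.eval z * g.eval z‖ ≤ Real.exp (-(s * (ℓ S'.κ + φ (ℓ S'.κ) + s : ℕ)))
  le_R : ((ℓ S'.κ + φ (ℓ S'.κ) + s : ℕ) : ℝ) ≤ S'.R
  τ_le_trans : S'.τ ≤ Real.exp (-(s * (ℓ S'.κ + φ (ℓ S'.κ) + s : ℕ)))

open Polynomial in
/-- Every stage can be continued: the derivative block is chosen first, then the translation block
at a radius at least `4R + s`, and then the factor, by `exists_poly_switch`. -/
lemma Stage.exists_next (φ n ℓ : ℕ → ℕ) (hn : ∀ k, 1 ≤ k → k ≤ n k) (hℓ : ∀ k, 1 ≤ k → k ≤ ℓ k)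
    (C : Set ℂ) (hCc : IsClosed C)
    (hC : ∀ z : ℂ, ∀ t : ℝ, 0 < t → (t : ℂ) * z ∈ C → z ∈ C)
    (u₀ : ℂ) (hu : ‖u₀‖ = 1) (hu₀ : u₀ ∉ C) (s : ℕ) (S : Stage) (hS : S.Good) :
    ∃ S' : Stage, S'.Good ∧ ∃ g, S.Next φ n ℓ C s S' g := by
  obtain ⟨hR, hτ⟩ := hS
  obtain ⟨_, _, D, hD⟩ := exists_poly_list_bound S.polys 0
  set ν' := S.ν + 1 + D + s with hν'
  set N := n ν' + φ (n ν') with hN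
  set κ' := S.κ + 1 + ⌈4 * S.R + s⌉₊ with hκ'
  set L := ℓ κ' + φ (ℓ κ') + s with hL
  set δ : ℝ := Real.exp (-(s * (N : ℕ))) / N.factorial with hδ
  have hδ0 : 0 < δ := by positivity
  obtain ⟨B, hB, _, hBd⟩ := exists_poly_list_bound S.polys (max S.R L)
  have hB0 : 0 < B := by linarith
  set E : ℝ := Real.exp (-(s * (L : ℕ))) with hE
  have hE0 : 0 < E := Real.exp_pos _
  obtain ⟨g, hg1, hg2⟩ := exists_poly_switch C hCc hC u₀ hu hu₀ S.R L hR
    (min (min S.τ δ) E / B) (by positivity)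
  have hκℓ : 4 * S.R + s ≤ ℓ κ' := by
    have h1 : (κ' : ℝ) ≤ ℓ κ' := by exact_mod_cast hℓ κ' (by omega)
    have h2 := Nat.le_ceil (4 * S.R + s)
    have h3 : ((⌈4 * S.R + s⌉₊ : ℕ) : ℝ) ≤ κ' := by exact_mod_cast (by omega)
    linarith
  have hνn : ν' ≤ n ν' := hn _ (by omega)
  refine ⟨⟨1 :: S.polys.map (· * g), κ', ν', max (S.R + 1) L, min (min (S.τ / 2) δ) E⟩,
    ⟨lt_max_of_lt_left (by linarith), by positivity⟩, g, ?_⟩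
  -- The tolerance for `g` was divided by `B` to compensate for the size of the old products.
  have hmul : ∀ P ∈ S.polys, ∀ z : ℂ, ‖z‖ ≤ max S.R L → ∀ w : ℂ,
      ‖w‖ ≤ min (min S.τ δ) E / B → ‖P.eval z * w‖ ≤ min (min S.τ δ) E := by
    intro P hP z hz w hw
    rw [norm_mul]
    calc ‖P.eval z‖ * ‖w‖ ≤ B * (min (min S.τ δ) E / B) :=
          mul_le_mul ((hBd P hP).2 z hz) hw (norm_nonneg _) hB0.le
      _ = _ := by field_simp
  exact
    { polys_eq := rfl
      κ_lt := by change S.κ < κ'; omega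
      ν_lt := by change S.ν < ν'; omega
      R_le := le_max_left _ _
      τ_le := (min_le_left _ _).trans (min_le_left _ _)
      degree_lt := fun P hP => by
        have := (hD P hP).1
        change P.natDegree + s < n ν'
        omega
      near_one := fun P hP z hz =>
        (hmul P hP z (hz.trans (le_max_left _ _)) _ (hg1 z hz)).trans (min_le_left _ _)
      τ_le_deriv := (min_le_left _ _).trans (min_le_right _ _)
      small := fun P hP z hzC hz1 hz2 => by
        refine (hmul P hP z (hz2.trans (le_max_right _ _)) _ (hg2 z hzC ?_ hz2)).trans
          (min_le_right _ _)
        change (ℓ κ' : ℝ) - s ≤ ‖z‖ at hz1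
        linarith
      le_R := le_max_right _ _
      τ_le_trans := min_le_right _ _ }

/-- If consecutive terms differ by at most `τ s` on the disc of radius `R s`, where `R s → ∞` and
`τ` decays geometrically, then the sequence converges to an entire function, with an explicit
rate. -/
lemma exists_entire_limit (F : ℕ → ℂ → ℂ) (hF : ∀ s, Differentiable ℂ (F s)) (R τ : ℕ → ℝ)
    (hR : ∀ s, R s + 1 ≤ R (s + 1)) (hτ0 : ∀ s, 0 ≤ τ s) (hτ : ∀ s, τ (s + 1) ≤ τ s / 2)
    (hd : ∀ s z, ‖z‖ ≤ R s → ‖F (s + 1) z - F s z‖ ≤ τ s) :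
    ∃ x : ℂ → ℂ, Differentiable ℂ x ∧ ∀ s z, ‖z‖ ≤ R s → ‖x z - F s z‖ ≤ 2 * τ s := by
  have hRmono : Monotone R := monotone_nat_of_le_succ fun s => by linarith [hR s]
  have hτgeo : ∀ s r, τ (s + r) ≤ τ s * (1 / 2) ^ r := by
    intro s r
    induction r with
    | zero => simp
    | succ r ih => rw [← add_assoc, pow_succ]; linarith [hτ (s + r)]
  have hRge : ∀ s : ℕ, R 0 + s ≤ R s := by
    intro s
    induction s with
    | zero => simp
    | succ s ih => push_cast; linarith [hR s]
  have hsum : ∀ s, HasSum (fun r => τ s * (1 / 2 : ℝ) ^ r) (2 * τ s) := by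
    intro s
    have := (hasSum_geometric_two).mul_left (τ s)
    rwa [mul_comm (τ s) 2] at this
  -- on the ball of radius `R s` every tail is Cauchy with explicit rate
  have hdist : ∀ s z, ‖z‖ ≤ R s → ∀ r, dist (F (s + r) z) (F (s + (r + 1)) z) ≤ τ s * (1 / 2) ^ r := by
    intro s z hz r
    rw [dist_comm, dist_eq_norm]
    exact (hd (s + r) z (hz.trans (hRmono (by omega)))).trans (hτgeo s r)
  have hlim : ∀ z, ∃ y, Tendsto (fun s => F s z) atTop (nhds y) := by
    intro z
    obtain ⟨s, hs⟩ := exists_nat_ge (‖z‖ - R 0)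
    have hz : ‖z‖ ≤ R s := by linarith [hRge s]
    have hc := cauchySeq_of_dist_le_of_summable _ (hdist s z hz) (hsum s).summable
    obtain ⟨y, hy⟩ := cauchySeq_tendsto_of_complete hc
    refine ⟨y, (tendsto_add_atTop_iff_nat s).mp ?_⟩
    simpa [add_comm] using hy
  choose x hx using hlim
  have hbd : ∀ s z, ‖z‖ ≤ R s → ‖x z - F s z‖ ≤ 2 * τ s := by
    intro s z hz
    have ht : Tendsto (fun r => F (s + r) z) atTop (nhds (x z)) := by
      have := (tendsto_add_atTop_iff_nat s).mpr (hx z)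
      simpa [add_comm] using this
    have := dist_le_tsum_of_dist_le_of_tendsto₀ _ (hdist s z hz) (hsum s).summable ht
    rw [(hsum s).tsum_eq, dist_comm, dist_eq_norm] at this
    simpa using this
  refine ⟨x, ?_, hbd⟩
  have hτlim : Tendsto (fun s => 2 * τ s) atTop (nhds 0) := by
    have h0 : Tendsto (fun s : ℕ => 2 * (τ 0 * (1 / 2 : ℝ) ^ s)) atTop (nhds (2 * (τ 0 * 0))) :=
      ((tendsto_pow_atTop_nhds_zero_of_lt_one (by norm_num) (by norm_num)).const_mul _).const_mul _
    rw [mul_zero, mul_zero] at h0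
    refine squeeze_zero (fun s => by linarith [hτ0 s]) (fun s => ?_) h0
    have := hτgeo 0 s
    rw [zero_add] at this
    linarith
  have hlu : TendstoLocallyUniformlyOn F x atTop univ := by
    rw [tendstoLocallyUniformlyOn_univ, tendstoLocallyUniformly_iff_forall_isCompact]
    intro K hK
    obtain ⟨ρ, hρ⟩ := hK.isBounded.exists_norm_le
    rw [Metric.tendstoUniformlyOn_iff]
    intro ε hε
    obtain ⟨s, hs⟩ := exists_nat_ge (ρ - R 0)
    filter_upwards [hτlim.eventually (gt_mem_nhds hε), eventually_ge_atTop s] with r hr hsr z hz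
    rw [dist_eq_norm]
    refine (hbd r z ?_).trans_lt hr
    exact (hρ z hz).trans ((by linarith [hRge s] : ρ ≤ R s).trans (hRmono hsr))
  rw [← differentiableOn_univ]
  exact hlu.differentiableOn (Eventually.of_forall fun s => (hF s).differentiableOn) isOpen_univ

open Polynomial in
/-- The outcome of the construction: `x i` is the infinite product of the factors of index `≥ i`
and `G i s` is the product of those of index in `[i, s)`. The functions `x i` approximate `1`;
on the disc of radius `s`, `x i` is extremely close to a polynomial of degree below the `s`-th
derivative block; and `x i` is extremely small on the `s`-th translation region of the
cone `C s`. -/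
lemma exists_functions (φ n : ℕ → ℕ) (ℓ : ℕ → ℕ → ℕ) (hn : ∀ k, 1 ≤ k → k ≤ n k)
    (hℓ : ∀ s k, 1 ≤ k → k ≤ ℓ s k) (C : ℕ → Set ℂ) (hCc : ∀ s, IsClosed (C s))
    (hC : ∀ s, ∀ z : ℂ, ∀ t : ℝ, 0 < t → (t : ℂ) * z ∈ C s → z ∈ C s)
    (u₀ : ℕ → ℂ) (hu : ∀ s, ‖u₀ s‖ = 1) (hu₀ : ∀ s, u₀ s ∉ C s) :
    ∃ (x : ℕ → ℂ → ℂ) (G : ℕ → ℕ → ℂ[X]) (κ ν : ℕ → ℕ),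
      (∀ i, Differentiable ℂ (x i)) ∧ StrictMono κ ∧ StrictMono ν ∧
      (∀ s, 1 ≤ κ s) ∧ (∀ s, 1 ≤ ν s) ∧
      (∀ (j : ℕ) (ε : ℝ), 0 < ε → ∃ i, ∀ z : ℂ, ‖z‖ ≤ j → ‖x i z - 1‖ ≤ ε) ∧
      (∀ i s, i ≤ s → (G i s).natDegree + s < n (ν s)) ∧
      (∀ i s : ℕ, i ≤ s → ∀ z : ℂ, ‖z‖ ≤ s → ‖x i z - (G i s).eval z‖ ≤
        3 * (Real.exp (-(s * (n (ν s) + φ (n (ν s)) : ℕ))) /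
          (n (ν s) + φ (n (ν s))).factorial)) ∧
      (∀ i s : ℕ, i ≤ s → ∀ z ∈ C s, (ℓ s (κ s) : ℝ) - s ≤ ‖z‖ →
        ‖z‖ ≤ (ℓ s (κ s) + φ (ℓ s (κ s)) + s : ℕ) →
        ‖x i z‖ ≤ 3 * Real.exp (-(s * (ℓ s (κ s) + φ (ℓ s (κ s)) + s : ℕ)))) := by
  have hstep : ∀ (s : ℕ) (S : {S : Stage // S.Good}), ∃ S' : {S : Stage // S.Good}, ∃ g,
      S.1.Next φ n (ℓ s) (C s) s S'.1 g := by
    rintro s ⟨S, hS⟩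
    obtain ⟨S', hS', g, hg⟩ := Stage.exists_next φ n (ℓ s) hn (hℓ s) (C s) (hCc s) (hC s)
      (u₀ s) (hu s) (hu₀ s) s S hS
    exact ⟨⟨S', hS'⟩, g, hg⟩
  choose nxt fac hnxt using hstep
  let init : {S : Stage // S.Good} := ⟨⟨[1], 0, 0, 1, 1⟩, by constructor <;> norm_num⟩
  let Q : ℕ → {S : Stage // S.Good} := fun s => Nat.rec init (fun s S => nxt s S) s
  let g : ℕ → ℂ[X] := fun s => fac s (Q s)
  have hQ : ∀ s, (Q s).1.Next φ n (ℓ s) (C s) s (Q (s + 1)).1 (g s) := fun s => hnxt s (Q s)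
  let G : ℕ → ℕ → ℂ[X] := fun i s => ∏ r ∈ Finset.Ico i s, g r
  have hGsucc : ∀ i s, i ≤ s → G i (s + 1) = G i s * g s := fun i s h =>
    Finset.prod_Ico_succ_top h _
  have hGmem : ∀ s i, i ≤ s → G i s ∈ (Q s).1.polys := by
    intro s
    induction s with
    | zero => intro i hi; simp [G, Q, init]
    | succ s ih =>
      intro i hi
      rw [(hQ s).polys_eq]
      rcases Nat.lt_or_ge s i with h | h
      · have : i = s + 1 := by omega
        subst this
        simp [G]
      · rw [hGsucc i s h]
        exact List.mem_cons_of_mem _ (List.mem_map.mpr ⟨_, ih i h, rfl⟩)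
  have hRs : ∀ s : ℕ, (s : ℝ) + 1 ≤ (Q s).1.R := by
    intro s
    induction s with
    | zero => simp [Q, init]
    | succ s ih => push_cast; linarith [(hQ s).R_le]
  have hτs : ∀ s : ℕ, (Q s).1.τ ≤ (1 / 2) ^ s := by
    intro s
    induction s with
    | zero => simp [Q, init]
    | succ s ih => rw [pow_succ]; linarith [(hQ s).τ_le]
  have hdiff : ∀ i s, i ≤ s → ∀ z, ‖z‖ ≤ (Q s).1.R →
      ‖(G i (s + 1)).eval z - (G i s).eval z‖ ≤ min (Q s).1.τ
        (Real.exp (-(s * (n (Q (s + 1)).1.ν + φ (n (Q (s + 1)).1.ν) : ℕ))) /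
          (n (Q (s + 1)).1.ν + φ (n (Q (s + 1)).1.ν)).factorial) := by
    intro i s his z hz
    have := (hQ s).near_one _ (hGmem s i his) z hz
    rw [hGsucc i s his, eval_mul]
    rwa [mul_sub, mul_one] at this
  have hlim : ∀ i, ∃ x : ℂ → ℂ, Differentiable ℂ x ∧ ∀ s, i ≤ s → ∀ z, ‖z‖ ≤ (Q s).1.R →
      ‖x z - (G i s).eval z‖ ≤ 2 * (Q s).1.τ := by
    intro i
    obtain ⟨x, hx, h⟩ := exists_entire_limit (fun s z => (G i (i + s)).eval z)
      (fun s => (G i (i + s)).differentiable) (fun s => (Q (i + s)).1.R) (fun s => (Q (i + s)).1.τ)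
      (fun s => (hQ (i + s)).R_le) (fun s => (Q (i + s)).2.2.le) (fun s => (hQ (i + s)).τ_le)
      (fun s z hz => (hdiff i (i + s) (by omega) z hz).trans (min_le_left _ _))
    refine ⟨x, hx, fun s hs z hz => ?_⟩
    obtain ⟨r, rfl⟩ := Nat.exists_eq_add_of_le hs
    exact h r z hz
  choose x hx hxG using hlim
  refine ⟨x, G, fun s => (Q (s + 1)).1.κ, fun s => (Q (s + 1)).1.ν, hx,
    strictMono_nat_of_lt_succ fun s => (hQ (s + 1)).κ_lt,
    strictMono_nat_of_lt_succ fun s => (hQ (s + 1)).ν_lt,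
    fun s => (Nat.zero_le _).trans_lt (hQ s).κ_lt, fun s => (Nat.zero_le _).trans_lt (hQ s).ν_lt,
    ?_, fun i s his => (hQ s).degree_lt _ (hGmem s i his), ?_, ?_⟩
  · intro j ε hε
    obtain ⟨r, hr⟩ := exists_pow_lt_of_lt_one (show 0 < ε / 2 by positivity)
      (show (1 / 2 : ℝ) < 1 by norm_num)
    refine ⟨max j r, fun z hz => ?_⟩
    have h1 := hxG (max j r) (max j r) le_rfl z (by
      have h2 : (j : ℝ) ≤ (max j r : ℕ) := by exact_mod_cast le_max_left j r
      linarith [hRs (max j r)])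
    have h3 : (1 / 2 : ℝ) ^ (max j r) ≤ (1 / 2) ^ r :=
      pow_le_pow_of_le_one (by norm_num) (by norm_num) (le_max_right _ _)
    have h4 := hτs (max j r)
    simp only [G, Finset.Ico_self, Finset.prod_empty, eval_one] at h1
    linarith
  · intro i s his z hz
    have hzR : ‖z‖ ≤ (Q s).1.R := by linarith [hRs s]
    have h1 := (hdiff i s his z hzR).trans (min_le_right _ _)
    have h2 := hxG i (s + 1) (by omega) z (hzR.trans (by linarith [(hQ s).R_le]))
    have h3 := (hQ s).τ_le_deriv
    have h4 := norm_add_le (x i z - (G i (s + 1)).eval z)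
      ((G i (s + 1)).eval z - (G i s).eval z)
    rw [sub_add_sub_cancel] at h4
    linarith
  · intro i s his z hzC hz1 hz2
    have h1 := (hQ s).small _ (hGmem s i his) z hzC hz1 hz2
    have h2 := hxG i (s + 1) (by omega) z (hz2.trans (hQ s).le_R)
    have h3 := (hQ s).τ_le_trans
    have h4 := norm_add_le (x i z - (G i (s + 1)).eval z) ((G i (s + 1)).eval z)
    rw [sub_add_cancel] at h4
    rw [hGsucc i s his, eval_mul] at h4 h2
    linarith

/-! ### Auxiliary estimates -/

lemma pnorm_le {j : ℝ} (hj : 0 ≤ j) {f : ℂ → ℂ} {c : ℝ} (h : ∀ z : ℂ, ‖z‖ ≤ j → ‖f z‖ ≤ c) :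
    pnorm j f ≤ c := by
  refine csSup_le ((nonempty_closedBall.mpr hj).image _) ?_
  rintro _ ⟨z, hz, rfl⟩
  exact h z (by simpa using hz)

open Polynomial in
lemma exists_poly_approx_entire (f : ℂ → ℂ) (hf : Differentiable ℂ f) (ρ : ℝ) (ε : ℝ) (hε : 0 < ε) :
    ∃ p : ℂ[X], ∀ z : ℂ, ‖z‖ ≤ ρ → ‖p.eval z - f z‖ ≤ ε := by
  have h := (hf.hasFPowerSeriesOnBall 0 (R := 1) one_pos).tendstoUniformlyOn'
    (r' := Real.toNNReal (ρ + 1)) ENNReal.coe_lt_top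
  obtain ⟨N, hN⟩ := (Metric.tendstoUniformlyOn_iff.mp h ε hε).exists
  refine ⟨∑ k ∈ Finset.range N, C ((cauchyPowerSeries f 0 (1 : NNReal)).coeff k) * X ^ k,
    fun z hz => ?_⟩
  have h1 := hN z (by
    rw [mem_ball_zero_iff]
    exact lt_of_lt_of_le (by linarith) (Real.le_coe_toNNReal _))
  rw [dist_comm, dist_eq_norm] at h1
  rw [eval_finsetSum]
  simp only [eval_mul, eval_C, eval_pow, eval_X]
  simp only [FormalMultilinearSeries.partialSum, sub_zero,
    FormalMultilinearSeries.apply_eq_pow_smul_coeff, smul_eq_mul] at h1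
  simp only [mul_comm (z ^ _)] at h1
  exact h1.le

open Polynomial in
lemma exists_poly_exp_bound (p : ℂ[X]) : ∃ c : ℝ, 0 ≤ c ∧ ∀ z : ℂ, ‖p.eval z‖ ≤ c * Real.exp ‖z‖ := by
  induction p using Polynomial.induction_on' with
  | add p q hp hq =>
    obtain ⟨c, hc, h⟩ := hp
    obtain ⟨d, hd, h'⟩ := hq
    refine ⟨c + d, by positivity, fun z => ?_⟩
    rw [eval_add, add_mul]
    exact (norm_add_le _ _).trans (add_le_add (h z) (h' z))
  | monomial k a =>
    refine ⟨‖a‖ * k.factorial, by positivity, fun z => ?_⟩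
    rw [eval_monomial, norm_mul, norm_pow, mul_assoc]
    refine mul_le_mul_of_nonneg_left ?_ (norm_nonneg _)
    have := Real.pow_div_factorial_le_exp ‖z‖ (norm_nonneg _) k
    rwa [div_le_iff₀' (by positivity)] at this

open Polynomial in
lemma iterate_deriv_poly (p : ℂ[X]) (k : ℕ) :
    deriv^[k] (fun z => p.eval z) = fun z => (derivative^[k] p).eval z := by
  induction k with
  | zero => rfl
  | succ k ih =>
    rw [Function.iterate_succ_apply', ih, Function.iterate_succ_apply']
    funext z
    exact Polynomial.deriv _

open Polynomial in
/-- Cauchy's estimate after subtracting a polynomial `q` of degree `< k`, which does not affect the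
`k`-th derivative. -/
lemma norm_iterate_deriv_le (h : ℂ → ℂ) (hh : Differentiable ℂ h) (q : ℂ[X]) (k : ℕ)
    (hq : q.natDegree < k) (j M : ℝ) (hM : ∀ w : ℂ, ‖w‖ ≤ j + 1 → ‖h w - q.eval w‖ ≤ M) (z : ℂ)
    (hz : ‖z‖ ≤ j) : ‖(deriv^[k] h) z‖ ≤ k.factorial * M := by
  have hd : Differentiable ℂ (h - fun w => q.eval w) := hh.sub q.differentiable
  have h1 : iteratedDeriv k (h - fun w => q.eval w) z = iteratedDeriv k h z := by
    rw [iteratedDeriv_sub hh.contDiff.contDiffAt q.differentiable.contDiff.contDiffAt,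
      iteratedDeriv_eq_iterate (f := fun w => q.eval w), iterate_deriv_poly,
      Polynomial.iterate_derivative_eq_zero hq]
    simp
  rw [← iteratedDeriv_eq_iterate, ← h1]
  have := Complex.norm_iteratedDeriv_le_of_forall_mem_sphere_norm_le (c := z) (C := M) k one_pos
    hd.diffContOnCl (fun w hw => hM w (by
      have h2 : ‖w - z‖ = 1 := by simpa [dist_eq_norm] using hw
      have h3 := norm_add_le (w - z) z
      rw [sub_add_cancel] at h3
      linarith))
  simpa using this

/-- In a family of blocks with right ends `N s`, large elements belong only to blocks of large
index. -/
lemma exists_index_le (N : ℕ → ℕ) (s₀ : ℕ) : ∃ K : ℕ, ∀ s k, k ≤ N s → K ≤ k → s₀ ≤ s := by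
  refine ⟨∑ s ∈ Finset.range s₀, N s + 1, fun s k hk hK => ?_⟩
  by_contra! h
  have := Finset.single_le_sum (f := N) (fun _ _ => Nat.zero_le _) (Finset.mem_range.mpr h)
  omega

lemma exists_exp_lt (c ε : ℝ) (hε : 0 < ε) :
    ∃ K : ℕ, ∀ k : ℕ, K ≤ k → c * Real.exp (-k) < ε := by
  have h : Tendsto (fun k : ℕ => c * Real.exp (-k)) atTop (nhds (c * 0)) :=
    (Real.tendsto_exp_neg_atTop_nhds_zero.comp tendsto_natCast_atTop_atTop).const_mul c
  rw [mul_zero] at h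
  obtain ⟨K, hK⟩ := eventually_atTop.mp (h.eventually (gt_mem_nhds hε))
  exact ⟨K, hK⟩

lemma PhiIncreasing.le_self {φ n : ℕ → ℕ} (h : PhiIncreasing φ n) : ∀ k, 1 ≤ k → k ≤ n k := by
  intro k hk
  induction k, hk using Nat.le_induction with
  | base => exact h.1 1 le_rfl
  | succ k hk ih => have := h.2 k hk; omega

lemma OutsideArc.one_sub_cos_le {θ : ℝ} (hθ : 0 < θ) {a : ℂ} (ha : ‖a‖ = 1)
    (h : OutsideArc θ a) : 1 - Real.cos θ ≤ ‖a - 1‖ := by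
  have ha' : a = Complex.exp (a.arg * Complex.I) := by
    have := Complex.norm_mul_exp_arg_mul_I a
    rw [ha] at this
    simpa using this.symm
  have harg : θ ≤ |a.arg| := by
    by_contra! hlt
    exact h a.arg (abs_lt.mp hlt).1 (abs_lt.mp hlt).2 ha'
  have hre : a.re = Real.cos |a.arg| := by
    rw [Real.cos_abs, ← Complex.exp_ofReal_mul_I_re, ← ha']
  have hcos : Real.cos |a.arg| ≤ Real.cos θ :=
    Real.cos_le_cos_of_nonneg_of_le_pi hθ.le (Complex.abs_arg_le_pi a) harg
  have h1 := Complex.abs_re_le_norm (a - 1)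
  rw [Complex.sub_re, Complex.one_re] at h1
  linarith [neg_abs_le (a.re - 1)]

open Polynomial in
/-- The estimate behind both translation statements: at a point `w` of modulus within `j` of `k`,
with `k` in the block `[ℓ, ℓ + Φ]`, the bound `3 e^{-rL}`, `L = ℓ + Φ + r`, on `y w` absorbs both
the factor `e^{bk}` and the polynomial growth of `p`. -/
lemma norm_exp_mul_translate_le {p : ℂ[X]} {y : ℂ → ℂ} {c b : ℝ} {ℓ Φ r k j : ℕ} {w : ℂ}
    (hc : 0 ≤ c) (hb : 0 < b) (hp : ∀ z : ℂ, ‖p.eval z‖ ≤ c * Real.exp ‖z‖)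
    (hy : (ℓ : ℝ) - r ≤ ‖w‖ → ‖w‖ ≤ (ℓ + Φ + r : ℕ) → ‖y w‖ ≤ 3 * Real.exp (-(r * (ℓ + Φ + r : ℕ))))
    (hk1 : ℓ ≤ k) (hk2 : k ≤ ℓ + Φ) (hj : j ≤ r) (hbr : b + 2 ≤ r)
    (hw1 : (k : ℝ) - j ≤ ‖w‖) (hw2 : ‖w‖ ≤ k + j) :
    ‖(Real.exp (b * k) : ℂ) * (p.eval w * y w)‖ ≤ 3 * c * Real.exp (-k) := by
  set L : ℕ := ℓ + Φ + r with hL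
  have h1 : (ℓ : ℝ) ≤ k := by exact_mod_cast hk1
  have h2 : (j : ℝ) ≤ r := by exact_mod_cast hj
  have h3 : (k : ℝ) + j ≤ L := by exact_mod_cast (by omega)
  have hy' := hy (by linarith) (by linarith)
  have hp' : ‖p.eval w‖ ≤ c * Real.exp L :=
    (hp w).trans (mul_le_mul_of_nonneg_left (Real.exp_le_exp.mpr (by linarith)) hc)
  rw [norm_mul, norm_mul, Complex.norm_real, Real.norm_of_nonneg (Real.exp_pos _).le]
  calc Real.exp (b * k) * (‖p.eval w‖ * ‖y w‖)
      ≤ Real.exp (b * k) * (c * Real.exp L * (3 * Real.exp (-(r * L)))) := by gcongr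
    _ = 3 * c * Real.exp (b * k + L + -(r * L)) := by rw [Real.exp_add, Real.exp_add]; ring
    _ ≤ 3 * c * Real.exp (-k) := by
      have hj0 : (0 : ℝ) ≤ j := Nat.cast_nonneg j
      have hk0 : (0 : ℝ) ≤ k := Nat.cast_nonneg k
      gcongr
      nlinarith

/-! ### The theorem -/

/-- Proposition 3.4: given `φ`-increasing sequences `(n_k)`, `(m_k)`, `(t_k)`, there exist
a dense subset `X₀` of `H(ℂ)` and strictly increasing sequences `(k_{0,s})`, `(k_{1,s})`,
`(k_{2,s})` such that for every `b > 0`, `θ ∈ (0,π)` and `x ∈ X₀`, `e^{bk}D^k x → 0` along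
`𝒩`, `e^{bk}T_a^k x → 0` along `ℳ` uniformly on `a ∈ 𝕋` outside the arc
`{e^{iα} : |α| < θ}`, and `e^{bk}T_1^k x → 0` along `𝒯`. -/
theorem stmt_7 (φ : ℕ → ℕ) (n m t : ℕ → ℕ)
    (hn : PhiIncreasing φ n) (hm : PhiIncreasing φ m) (ht : PhiIncreasing φ t) :
    ∃ (X₀ : Set (ℂ → ℂ)) (k0 k1 k2 : ℕ → ℕ),
      (∀ f ∈ X₀, Differentiable ℂ f) ∧ DenseH X₀ ∧
      StrictMono k0 ∧ StrictMono k1 ∧ StrictMono k2 ∧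
      (∀ s, 1 ≤ k0 s) ∧ (∀ s, 1 ≤ k1 s) ∧ (∀ s, 1 ≤ k2 s) ∧
      ∀ b : ℝ, 0 < b → ∀ θ : ℝ, 0 < θ → θ < Real.pi → ∀ x ∈ X₀,
        (∀ j : ℕ, 1 ≤ j → ∀ ε : ℝ, 0 < ε → ∃ K : ℕ, ∀ s : ℕ, 1 ≤ s →
          ∀ k : ℕ, n (k0 s) ≤ k → k ≤ n (k0 s) + φ (n (k0 s)) → K ≤ k →
            pnorm j (fun z => (Real.exp (b * k) : ℂ) * (deriv^[k] x) z) < ε) ∧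
        (∀ j : ℕ, 1 ≤ j → ∀ ε : ℝ, 0 < ε → ∃ K : ℕ, ∀ s : ℕ, 1 ≤ s →
          ∀ k : ℕ, m (k1 s) ≤ k → k ≤ m (k1 s) + φ (m (k1 s)) → K ≤ k →
            ∀ a : ℂ, ‖a‖ = 1 → OutsideArc θ a →
              pnorm j (fun z => (Real.exp (b * k) : ℂ) * x (z + (k : ℂ) * a)) < ε) ∧
        (∀ j : ℕ, 1 ≤ j → ∀ ε : ℝ, 0 < ε → ∃ K : ℕ, ∀ s : ℕ, 1 ≤ s →
          ∀ k : ℕ, t (k2 s) ≤ k → k ≤ t (k2 s) + φ (t (k2 s)) → K ≤ k →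
            pnorm j (fun z => (Real.exp (b * k) : ℂ) * x (z + (k : ℂ))) < ε) := by
  -- Even steps serve the sequence `m` and odd steps the sequence `t`. The even cones exhaust
  -- `ℂ` minus the positive half-line, and the odd ones are the closed right half-plane.
  let ℓ : ℕ → ℕ → ℕ := fun r => if Even r then m else t
  let C : ℕ → Set ℂ := fun r =>
    if Even r then {z | ‖z‖ ≤ (r + 1) * ‖z - (‖z‖ : ℂ)‖} else {z | 0 ≤ z.re}
  have hℓe : ∀ s, ℓ (2 * s) = m := fun s => by simp [ℓ]
  have hℓo : ∀ s, ℓ (2 * s + 1) = t := fun s => by simp [ℓ]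
  have hCe : ∀ s, C (2 * s) = {z | ‖z‖ ≤ ((2 * s : ℕ) + 1) * ‖z - (‖z‖ : ℂ)‖} := fun s => by
    simp [C]
  have hCo : ∀ s, C (2 * s + 1) = {z | 0 ≤ z.re} := fun s => by simp [C]
  have hpar : ∀ r : ℕ, ∃ s, r = 2 * s ∨ r = 2 * s + 1 := fun r => ⟨r / 2, by omega⟩
  obtain ⟨x, G, κ, ν, hx, hκ, hν, hκ1, hν1, hdense, hdeg, hN, hMT⟩ :=
    exists_functions φ n ℓ hn.le_self
      (by
        intro r
        obtain ⟨s, rfl | rfl⟩ := hpar r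
        · rw [hℓe]; exact hm.le_self
        · rw [hℓo]; exact ht.le_self) C
      (by
        intro r
        obtain ⟨s, rfl | rfl⟩ := hpar r
        · rw [hCe]; exact isClosed_le (by fun_prop) (by fun_prop)
        · rw [hCo]; exact isClosed_le continuous_const Complex.continuous_re)
      (by
        intro r z u hu hz
        obtain ⟨s, rfl | rfl⟩ := hpar r
        · rw [hCe, mem_ofPred_eq] at hz ⊢
          have h1 : ‖(u : ℂ) * z‖ = u * ‖z‖ := by
            rw [norm_mul, Complex.norm_real, Real.norm_of_nonneg hu.le]
          have h2 : ‖(u : ℂ) * z - (‖(u : ℂ) * z‖ : ℂ)‖ = u * ‖z - (‖z‖ : ℂ)‖ := by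
            rw [h1]
            push_cast
            rw [← mul_sub, norm_mul, Complex.norm_real, Real.norm_of_nonneg hu.le]
          rw [h2, h1] at hz
          refine le_of_mul_le_mul_left ?_ hu
          linarith
        · rw [hCo, mem_ofPred_eq] at hz ⊢
          rw [Complex.re_ofReal_mul] at hz
          exact nonneg_of_mul_nonneg_right hz hu)
      -- directions missed by the cones
      (fun r => if Even r then 1 else -1)
      (by intro r; split_ifs <;> simp)
      (by
        intro r
        obtain ⟨s, rfl | rfl⟩ := hpar r
        · rw [hCe]; simp
        · rw [hCo]; simp)
  refine ⟨{f | ∃ (p : Polynomial ℂ) (i : ℕ), f = fun z => p.eval z * x i z}, ν,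
    fun s => κ (2 * s), fun s => κ (2 * s + 1), ?_, ?_, hν,
    fun a b hab => hκ (by omega), fun a b hab => hκ (by omega), hν1,
    fun s => hκ1 _, fun s => hκ1 _, ?_⟩
  · rintro _ ⟨p, i, rfl⟩
    exact p.differentiable.mul (hx i)
  · intro f hf j hj ε hε
    obtain ⟨p, hp⟩ := exists_poly_approx_entire f hf j (ε / 4) (by positivity)
    obtain ⟨B, hB, _, hBd⟩ := exists_poly_list_bound [p] j
    have hB0 : 0 < B := by linarith
    obtain ⟨i, hi⟩ := hdense j (ε / 4 / B) (by positivity)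
    refine ⟨_, ⟨p, i, rfl⟩, lt_of_le_of_lt (pnorm_le (Nat.cast_nonneg j) ?_) (half_lt_self hε)⟩
    intro z hz
    have h1 := hp z hz
    have h2 : ‖p.eval z * (x i z - 1)‖ ≤ ε / 4 := by
      rw [norm_mul]
      calc ‖p.eval z‖ * ‖x i z - 1‖ ≤ B * (ε / 4 / B) :=
            mul_le_mul ((hBd p (by simp)).2 z hz) (hi z hz) (norm_nonneg _) hB0.le
        _ = ε / 4 := by field_simp
    calc ‖p.eval z * x i z - f z‖ = ‖p.eval z * (x i z - 1) + (p.eval z - f z)‖ := by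
          congr 1; ring
      _ ≤ _ := norm_add_le _ _
      _ ≤ ε / 2 := by linarith
  rintro b hb θ hθ hθπ _ ⟨p, i, rfl⟩
  obtain ⟨c, hc, hpc⟩ := exists_poly_exp_bound p
  refine ⟨?_, ?_, ?_⟩
  · intro j hj ε hε
    obtain ⟨B, hB, _, hBd⟩ := exists_poly_list_bound [p] (j + 1 : ℝ)
    have hB0 : 0 < B := by linarith
    obtain ⟨K₁, hK₁⟩ := exists_exp_lt (3 * B) ε hε
    obtain ⟨K₂, hK₂⟩ := exists_index_le (fun s => n (ν s) + φ (n (ν s)))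
      (i + (j + 1) + p.natDegree + ⌈b + 1⌉₊)
    refine ⟨max K₁ K₂, fun s _ k hk1 hk2 hK => ?_⟩
    have hs := hK₂ s k hk2 ((le_max_right _ _).trans hK)
    refine lt_of_le_of_lt (pnorm_le (Nat.cast_nonneg j) ?_) (hK₁ k ((le_max_left _ _).trans hK))
    intro z hz
    set N : ℕ := n (ν s) + φ (n (ν s)) with hNdef
    have hbs : b + 1 ≤ s := (Nat.le_ceil _).trans (by exact_mod_cast (by omega))
    have hjs : (j : ℝ) + 1 ≤ s := by exact_mod_cast (by omega)
    have hd := hdeg i s (by omega)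
    have hD := norm_iterate_deriv_le (fun z => p.eval z * x i z) (p.differentiable.mul (hx i))
      (p * G i s) k (by have := Polynomial.natDegree_mul_le (p := p) (q := G i s); omega) j
      (B * (3 * (Real.exp (-(s * (N : ℕ))) / N.factorial)))
      (by
        intro w hw
        rw [Polynomial.eval_mul, ← mul_sub, norm_mul]
        exact mul_le_mul ((hBd p (by simp)).2 w hw) (hN i s (by omega) w (by linarith))
          (norm_nonneg _) hB0.le) z hz
    have hfac : (k.factorial : ℝ) ≤ N.factorial := by exact_mod_cast Nat.factorial_le hk2
    have hkN : (k : ℝ) ≤ N := by exact_mod_cast hk2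
    have hk0 : (0 : ℝ) ≤ k := Nat.cast_nonneg k
    rw [norm_mul, Complex.norm_real, Real.norm_of_nonneg (Real.exp_pos _).le]
    calc Real.exp (b * k) * ‖(deriv^[k] fun z => p.eval z * x i z) z‖
        ≤ Real.exp (b * k) *
          (N.factorial * (B * (3 * (Real.exp (-(s * (N : ℕ))) / N.factorial)))) := by
          gcongr
          exact hD.trans (by gcongr)
      _ = 3 * B * Real.exp (b * k + -(s * (N : ℕ))) := by
          have : (N.factorial : ℝ) ≠ 0 := by positivity
          rw [Real.exp_add]
          field_simp
      _ ≤ 3 * B * Real.exp (-k) := by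
          gcongr
          nlinarith
  · intro j hj ε hε
    set δ : ℝ := 1 - Real.cos θ with hδ
    have hδ0 : 0 < δ := by
      have := Real.cos_lt_cos_of_nonneg_of_le_pi le_rfl hθπ.le hθ
      rw [Real.cos_zero] at this
      linarith
    obtain ⟨K₁, hK₁⟩ := exists_exp_lt (3 * c) ε hε
    obtain ⟨K₂, hK₂⟩ := exists_index_le (fun s => m (κ (2 * s)) + φ (m (κ (2 * s))))
      (i + j + ⌈b + 2⌉₊ + ⌈4 / δ⌉₊)
    refine ⟨max (max K₁ K₂) (j + ⌈4 * j / δ⌉₊), fun s _ k hk1 hk2 hK a ha haθ => ?_⟩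
    have hs := hK₂ s k hk2 ((le_max_right _ _).trans ((le_max_left _ _).trans hK))
    refine lt_of_le_of_lt (pnorm_le (Nat.cast_nonneg j) ?_)
      (hK₁ k ((le_max_left _ _).trans ((le_max_left _ _).trans hK)))
    intro z hz
    have hK' := (le_max_right _ _).trans hK
    have hjk : (j : ℝ) ≤ k := by exact_mod_cast (by omega)
    have hka : ‖(k : ℂ) * a‖ = k := by rw [norm_mul, ha, Complex.norm_natCast, mul_one]
    have hw2 : ‖z + (k : ℂ) * a‖ ≤ k + j := by
      have := norm_add_le z ((k : ℂ) * a)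
      linarith
    have hw1 : (k : ℝ) - j ≤ ‖z + (k : ℂ) * a‖ := by
      have := norm_sub_le_norm_add ((k : ℂ) * a) z
      rw [add_comm] at this
      linarith
    have hbs : b + 2 ≤ (2 * s : ℕ) := (Nat.le_ceil _).trans (by exact_mod_cast (by omega))
    have hδs : 4 / δ ≤ (2 * s : ℕ) := (Nat.le_ceil _).trans (by exact_mod_cast (by omega))
    have hδk : 4 * j / δ ≤ k := (Nat.le_ceil _).trans (Nat.cast_le.mpr (by omega))
    rw [div_le_iff₀ hδ0] at hδs hδk
    -- As `|a - 1| ≥ δ` and `k` is large, `w` is at distance at least `kδ/2` from `|w|`.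
    have hwC : z + (k : ℂ) * a ∈ C (2 * s) := by
      rw [hCe, mem_ofPred_eq]
      set w := z + (k : ℂ) * a with hw
      have h1 : (k : ℝ) * δ ≤ ‖(k : ℂ) * a - k‖ := by
        have : (k : ℂ) * a - k = k * (a - 1) := by ring
        rw [this, norm_mul, Complex.norm_natCast]
        exact mul_le_mul_of_nonneg_left (haθ.one_sub_cos_le hθ ha) (Nat.cast_nonneg k)
      have h2 : ‖(k : ℂ) * a - k‖ ≤ ‖w - (‖w‖ : ℂ)‖ + ‖z‖ + |‖w‖ - k| := by
        have : (k : ℂ) * a - k = (w - (‖w‖ : ℂ)) - z + ((‖w‖ - k : ℝ) : ℂ) := by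
          rw [hw]; push_cast; ring
        rw [this]
        refine (norm_add_le _ _).trans ?_
        rw [Complex.norm_real, Real.norm_eq_abs]
        linarith [norm_sub_le (w - (‖w‖ : ℂ)) z]
      have h3 : |‖w‖ - k| ≤ j := abs_le.mpr ⟨by linarith, by linarith⟩
      have h4 : k * δ / 2 ≤ ‖w - (‖w‖ : ℂ)‖ := by linarith
      have hk0 : (0 : ℝ) ≤ k := Nat.cast_nonneg k
      calc ‖w‖ ≤ 2 * k := by linarith
        _ ≤ ((2 * s : ℕ) * δ) * k / 2 := by nlinarith
        _ = (2 * s : ℕ) * (k * δ / 2) := by ring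
        _ ≤ ((2 * s : ℕ) + 1) * (k * δ / 2) := by gcongr; linarith
        _ ≤ _ := by gcongr
    refine norm_exp_mul_translate_le (r := 2 * s) (j := j) hc hb hpc (fun h1 h2 => ?_) hk1 hk2
      (by omega) hbs hw1 hw2
    have := hMT i (2 * s) (by omega) _ hwC
    rw [hℓe] at this
    exact this h1 h2
  · intro j hj ε hε
    obtain ⟨K₁, hK₁⟩ := exists_exp_lt (3 * c) ε hε
    obtain ⟨K₂, hK₂⟩ := exists_index_le (fun s => t (κ (2 * s + 1)) + φ (t (κ (2 * s + 1))))
      (i + j + ⌈b + 2⌉₊)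
    refine ⟨max (max K₁ K₂) j, fun s _ k hk1 hk2 hK => ?_⟩
    have hs := hK₂ s k hk2 ((le_max_right _ _).trans ((le_max_left _ _).trans hK))
    refine lt_of_le_of_lt (pnorm_le (Nat.cast_nonneg j) ?_)
      (hK₁ k ((le_max_left _ _).trans ((le_max_left _ _).trans hK)))
    intro z hz
    have hjk : (j : ℝ) ≤ k := by exact_mod_cast (le_max_right _ _).trans hK
    have hw2 : ‖z + (k : ℂ)‖ ≤ k + j := by
      have := norm_add_le z (k : ℂ)
      rw [Complex.norm_natCast] at this
      linarith
    have hw1 : (k : ℝ) - j ≤ ‖z + (k : ℂ)‖ := by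
      have := norm_sub_le_norm_add (k : ℂ) z
      rw [add_comm, Complex.norm_natCast] at this
      linarith
    have hbs : b + 2 ≤ (2 * s + 1 : ℕ) := (Nat.le_ceil _).trans (by exact_mod_cast (by omega))
    have hwC : z + (k : ℂ) ∈ C (2 * s + 1) := by
      rw [hCo, mem_ofPred_eq, Complex.add_re, Complex.natCast_re]
      linarith [neg_abs_le z.re, Complex.abs_re_le_norm z]
    refine norm_exp_mul_translate_le (r := 2 * s + 1) (j := j) hc hb hpc (fun h1 h2 => ?_) hk1 hk2
      (by omega) hbs hw1 hw2
    have := hMT i (2 * s + 1) (by omega) _ hwC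
    rw [hℓo] at this
    exact this h1 h2
end

section
/- Let φ : ℕ → ℕ be a map and let (m_k) and (t_k) be two φ-increasing sequences of positive integers. There exist two strictly increasing sequences (k_{1,s}) and (k_{2,s}) of positive integers such that for every b > 0, every ε > 0, every integer d ≥ 0 and every s ≥ 1, there exists a polynomial P satisfying: (1) val(P) ≥ d and p₁(P) ≥ 1/2; (2) for every j ≤ s, every a ∈ 𝕋 with a ∉ {e^{iα} : α ∈ (−1/j, 1/j)} and every k ∈ [m_{k_{1,j}}, m_{k_{1,j}} + φ(m_{k_{1,j}})], p_j(e^{bk} T_a^k P) < ε; (3) for every j ≤ s and every k ∈ [t_{k_{2,j}}, t_{k_{2,j}} + φ(t_{k_{2,j}})], p_j(e^{bk} T_1^k P) < ε. -/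
/-!
The translates `T_a^k P` on the disc of radius `j` only see the values of `P` on discs `D(ka, j)`.
For `a` outside the arc of half-angle `1/j` and `k` in a window far from `0`, these discs lie in an
annulus with a slot around the positive real axis; for `a = 1` they lie in an annulus intersected
with a right half-plane, which misses the negative real axis. Choosing the windows recursively
(`radius`, `index`), the annuli alternate between the two types and are pairwise separated by
circles, so `1` can be joined to infinity outside their union: cross a slotted annulus along the
positive axis, a half-annulus along the negative axis, and turn along the circles in between
(`unbounded_component`). The choice of the windows depends on neither `b`, `ε`, `d` nor `s`.

For a compact set `K` and a point `x` in the unbounded component of `Kᶜ`, there are polynomials `q`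
with `q(x) = 1` and `q` as small as desired on `K` (`exists_polynomial_separating`). With `K` the
union of the first `2 * s + 2` pieces and `x = 1`, the polynomial `P = z^d q` has all the required
properties.
-/

open Filter Metric Set

/-! ### Polynomial separation of a point from a compact set -/

/-- A weak form of Runge's theorem: a point that can be joined to infinity outside the compact set
`K` is separated from `K` by a polynomial. The spectrum of the coordinate function in the closed
subalgebra of `C(K, ℂ)` it generates differs from `K` only by bounded components of `Kᶜ`, so
`1 / (x - z)` is a uniform limit of polynomials `p` on `K`, and `1 - (x - z) p(z)` separates. -/
lemma exists_polynomial_separating {K : Set ℂ} (hK : IsCompact K) {x : ℂ}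
    (hunb : ¬ Bornology.IsBounded (connectedComponentIn Kᶜ x)) {δ : ℝ} (hδ : 0 < δ) :
    ∃ q : Polynomial ℂ, q.eval x = 1 ∧ ∀ z ∈ K, ‖q.eval z‖ < δ := by
  have : CompactSpace K := isCompact_iff_compactSpace.mp hK
  let f : C(K, ℂ) := ⟨fun z => (z : ℂ), continuous_subtype_val⟩
  let S := Algebra.elemental ℂ f
  let g : S := ⟨f, Algebra.elemental.self_mem ℂ f⟩
  have hspec : spectrum ℂ f = K := by
    rw [ContinuousMap.spectrum_eq_range]
    exact Subtype.range_coe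
  have : IsClosed (S : Set C(K, ℂ)) := Algebra.elemental.isClosed ℂ f
  have hx : x ∉ spectrum ℂ g := by
    intro h
    have h2 := Subalgebra.spectrum_isBounded_connectedComponentIn S g h
    change Bornology.IsBounded (connectedComponentIn (spectrum ℂ f)ᶜ x) at h2
    rw [hspec] at h2
    exact hunb h2
  rw [spectrum.notMem_iff] at hx
  obtain ⟨v, hv⟩ := hx.exists_right_inv
  have hv' : (algebraMap ℂ C(K, ℂ) x - f) * (v : C(K, ℂ)) = 1 := by
    have := congrArg (Subtype.val) hv
    simpa using this
  have hmem : (v : C(K, ℂ)) ∈ closure ((Algebra.adjoin ℂ {f} : Subalgebra ℂ C(K, ℂ)) : Set _) :=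
    v.2
  set M := ‖algebraMap ℂ C(K, ℂ) x - f‖ with hM
  have hM0 : 0 ≤ M := norm_nonneg _
  obtain ⟨y, hy, hyd⟩ := Metric.mem_closure_iff.mp hmem (δ / (M + 1)) (by positivity)
  rw [SetLike.mem_coe, Algebra.adjoin_singleton_eq_range_aeval] at hy
  obtain ⟨p, rfl⟩ := hy
  refine ⟨1 - (Polynomial.C x - Polynomial.X) * p, by simp, fun z hz => ?_⟩
  -- the error at `z` is `(x - z) * (v z - p z)`, where `v z = 1 / (x - z)`
  have hp : (Polynomial.aeval f p) ⟨z, hz⟩ = p.eval z := by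
    simp [f]
  have e1 := congrArg (fun h : C(K, ℂ) => h ⟨z, hz⟩) hv'
  have e2 : (x - z) * (v : C(K, ℂ)) ⟨z, hz⟩ = 1 := e1
  have e3 : ‖x - z‖ ≤ M := (algebraMap ℂ C(K, ℂ) x - f).norm_coe_le_norm ⟨z, hz⟩
  have e4 : ‖(v : C(K, ℂ)) ⟨z, hz⟩ - p.eval z‖ < δ / (M + 1) := by
    rw [← hp, ← dist_eq_norm]
    exact (ContinuousMap.dist_apply_le_dist _).trans_lt hyd
  have e5 : (1 - (Polynomial.C x - Polynomial.X) * p).eval z =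
      (x - z) * ((v : C(K, ℂ)) ⟨z, hz⟩ - p.eval z) := by
    rw [mul_sub, e2]; simp
  rw [e5, norm_mul]
  have e6 : M * (δ / (M + 1)) < δ := by
    rw [mul_div_assoc', div_lt_iff₀ (by positivity)]; nlinarith
  exact (mul_le_mul e3 e4.le (norm_nonneg _) hM0).trans_lt e6

/-! ### Geometry of the slotted annuli -/

/-- If the sets `S n` lie in successive open annuli and each misses a ray `ℝ₊ u n`, then the
complement of their union joins `c 0` to infinity: cross the `n`-th annulus along its free ray and
turn along the circles of radius `c n`. -/
lemma unbounded_component {c : ℕ → ℝ} (hc : StrictMono c) (hc0 : 0 ≤ c 0)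
    (hctop : Filter.Tendsto c Filter.atTop Filter.atTop)
    {S : ℕ → Set ℂ} {u : ℕ → ℂ} (hu : ∀ n, ‖u n‖ = 1)
    (hS : ∀ n, ∀ z ∈ S n, c n < ‖z‖ ∧ ‖z‖ < c (n + 1))
    (hfree : ∀ n, ∀ r : ℝ, 0 ≤ r → (r : ℂ) * u n ∉ S n)
    {K : Set ℂ} (hK : K ⊆ ⋃ n, S n) :
    ¬ Bornology.IsBounded (connectedComponentIn Kᶜ (c 0 : ℂ)) := by
  have hcn : ∀ n, 0 ≤ c n := fun n => hc0.trans (hc.monotone (Nat.zero_le n))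
  have hsphere : ∀ n, Metric.sphere (0 : ℂ) (c n) ⊆ Kᶜ := by
    intro n z hz hzK
    obtain ⟨i, hi⟩ := mem_iUnion.mp (hK hzK)
    have h := hS i z hi
    rw [mem_sphere_zero_iff_norm.mp hz] at h
    have h1 := hc.lt_iff_lt.mp h.1
    have h2 := hc.lt_iff_lt.mp h.2
    omega
  have hpre : ∀ r : ℝ, IsPreconnected (Metric.sphere (0 : ℂ) r) := fun r =>
    isPreconnected_sphere (by rw [Complex.rank_real_complex]; norm_num) 0 r
  have hmemsphere : ∀ n i, (c n : ℂ) * u i ∈ Metric.sphere (0 : ℂ) (c n) := by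
    intro n i
    simp [hu, abs_of_nonneg (hcn n)]
  have hmemsphere' : ∀ n, (c n : ℂ) ∈ Metric.sphere (0 : ℂ) (c n) := by
    intro n
    simp [abs_of_nonneg (hcn n)]
  have hseg : ∀ n, (fun r : ℝ => (r : ℂ) * u n) '' Icc (c n) (c (n + 1)) ⊆ Kᶜ := by
    rintro n _ ⟨r, hr, rfl⟩ hzK
    have hr0 : 0 ≤ r := (hcn n).trans hr.1
    obtain ⟨i, hi⟩ := mem_iUnion.mp (hK hzK)
    have h := hS i _ hi
    simp only [norm_mul, hu, mul_one, Complex.norm_real, Real.norm_eq_abs, abs_of_nonneg hr0] at h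
    have h1 := hc.lt_iff_lt.mp (h.1.trans_le hr.2)
    have h2 := hc.lt_iff_lt.mp (hr.1.trans_lt h.2)
    have : i = n := by omega
    subst this
    exact hfree i r hr0 hi
  have key : ∀ n, Metric.sphere (0 : ℂ) (c n) ⊆ connectedComponentIn Kᶜ (c 0 : ℂ) := by
    intro n
    induction n with
    | zero => exact (hpre _).subset_connectedComponentIn (hmemsphere' 0) (hsphere 0)
    | succ n ih =>
      have a1 := ih (hmemsphere n n)
      have hcc : c n ≤ c (n + 1) := (hc (Nat.lt_succ_self n)).le
      have a2 : (c (n + 1) : ℂ) * u n ∈ connectedComponentIn Kᶜ (c 0 : ℂ) := by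
        rw [connectedComponentIn_eq a1]
        refine IsPreconnected.subset_connectedComponentIn ?_ ?_ (hseg n) ?_
        · exact isPreconnected_Icc.image _ (by fun_prop)
        · exact ⟨c n, ⟨le_rfl, hcc⟩, rfl⟩
        · exact ⟨c (n + 1), ⟨hcc, le_rfl⟩, rfl⟩
      rw [connectedComponentIn_eq a2]
      exact (hpre _).subset_connectedComponentIn (hmemsphere (n + 1) n) (hsphere (n + 1))
  intro hb
  obtain ⟨R, hR⟩ := hb.exists_norm_le
  obtain ⟨n, hn⟩ := (hctop.eventually_gt_atTop R).exists
  have := hR _ (key n (hmemsphere' n))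
  rw [mem_sphere_zero_iff_norm.mp (hmemsphere' n)] at this
  linarith

/-- The translates of the disc of radius `j` by `k a`, with `a` outside the arc of half-angle `1/j`,
keep away from the part of the positive real axis beyond `j`. -/
lemma avoid_positive_axis {j : ℕ} (hj : 1 ≤ j) {a w : ℂ} (ha : ‖a‖ = 1)
    (harc : OutsideArc (1 / (j : ℝ)) a) (hw : ‖w‖ ≤ j) {k : ℝ} (hk : 2 * (j : ℝ) * (j + 1) ≤ k) :
    (w + (k : ℂ) * a).re ≤ j ∨ 1 ≤ |(w + (k : ℂ) * a).im| := by
  have hj' : (1 : ℝ) ≤ j := by exact_mod_cast hj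
  have hk0 : 0 ≤ k := by nlinarith
  have hare : a.re = Real.cos a.arg := by
    rw [Complex.cos_arg (by intro h; simp [h] at ha), ha, div_one]
  have haim : a.im = Real.sin a.arg := by rw [Complex.sin_arg, ha, div_one]
  have haexp : a = Complex.exp (a.arg * Complex.I) := by
    conv_lhs => rw [← Complex.norm_mul_exp_arg_mul_I a, ha]
    simp
  have hα : 1 / (j : ℝ) ≤ |a.arg| := by
    by_contra! h
    rw [abs_lt] at h
    exact harc a.arg h.1 h.2 haexp
  have hwre := (abs_le.mp ((Complex.abs_re_le_norm w).trans hw)).2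
  have hwim := (Complex.abs_im_le_norm w).trans hw
  simp only [Complex.add_re, Complex.add_im, Complex.re_ofReal_mul, Complex.im_ofReal_mul]
  rcases le_total |a.arg| (Real.pi / 2) with h | h
  · right
    have h1 : 2 / Real.pi * |a.arg| ≤ Real.sin |a.arg| := Real.mul_le_sin (abs_nonneg _) h
    have h2 : |a.im| = Real.sin |a.arg| := by
      rw [haim, Real.abs_sin_eq_sin_abs_of_abs_le_pi (Complex.abs_arg_le_pi a)]
    have h3 : 1 / 2 ≤ 2 / Real.pi := by
      rw [div_le_div_iff₀ (by norm_num) Real.pi_pos]; linarith [Real.pi_le_four]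
    have h4 : 1 / 2 * (1 / (j : ℝ)) ≤ |a.im| := by
      rw [h2]
      exact (mul_le_mul h3 hα (by positivity) (by positivity)).trans h1
    have h5 : (j : ℝ) + 1 ≤ k * |a.im| := by
      calc (j : ℝ) + 1 = (2 * (j : ℝ) * (j + 1)) * (1 / 2 * (1 / (j : ℝ))) := by
            field_simp
        _ ≤ k * |a.im| := mul_le_mul hk h4 (by positivity) hk0
    have h6 : |k * a.im| - |w.im| ≤ |w.im + k * a.im| := by
      have := abs_sub_abs_le_abs_sub (k * a.im) (-w.im)
      rw [abs_neg, sub_neg_eq_add, add_comm (k * a.im)] at this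
      exact this
    rw [abs_mul, abs_of_nonneg hk0] at h6
    linarith
  · left
    have h1 : a.re ≤ 0 := by
      rw [hare, ← Real.cos_abs]
      exact Real.cos_nonpos_of_pi_div_two_le_of_le h
        ((Complex.abs_arg_le_pi a).trans (by linarith [Real.pi_pos]))
    nlinarith

/-! ### Recursive choice of the windows -/

lemma PhiIncreasing.le_apply {φ n : ℕ → ℕ} (h : PhiIncreasing φ n) {k : ℕ} (hk : 1 ≤ k) :
    k ≤ n k := by
  induction k, hk using Nat.le_induction with
  | base => exact h.1 1 le_rfl
  | succ k hk ih =>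
    have := h.2 k hk
    omega

/-- The two given sequences, alternating with the parity of the index. -/
def alternate (m t : ℕ → ℕ) (n : ℕ) : ℕ → ℕ := if Even n then m else t

/-- Recursive radii `c n` of the separating circles. With `k = c n + 10 * (n + 1) ^ 2` and `p` the
`n`-th of the alternating sequences, `c (n + 1)` exceeds `p k + φ (p k) + n`, so that the discs of
radius `n` centred at modulus at most `p k + φ (p k)` lie inside the circle of radius `c (n + 1)`.
The margin `10 * (n + 1) ^ 2` keeps these discs outside the circle of radius `c n` when their
centres have modulus at least `p k ≥ k`, and provides the lower bound required by
`avoid_positive_axis`. -/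
def radius (φ m t : ℕ → ℕ) : ℕ → ℕ
  | 0 => 1
  | n + 1 =>
    let k := radius φ m t n + 10 * (n + 1) ^ 2
    k + alternate m t n k + φ (alternate m t n k) + n + 1

/-- The index chosen at stage `n`. -/
def index (φ m t : ℕ → ℕ) (n : ℕ) : ℕ := radius φ m t n + 10 * (n + 1) ^ 2

/-- The step chosen at stage `n`: a term of `m` for even `n`, of `t` for odd `n`. -/
def step (φ m t : ℕ → ℕ) (n : ℕ) : ℕ := alternate m t n (index φ m t n)

lemma radius_succ (φ m t : ℕ → ℕ) (n : ℕ) : radius φ m t (n + 1) =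
    index φ m t n + step φ m t n + φ (step φ m t n) + n + 1 := rfl

lemma index_lt_succ (φ m t : ℕ → ℕ) (n : ℕ) : index φ m t n < index φ m t (n + 1) := by
  have := radius_succ φ m t n
  have : index φ m t (n + 1) = radius φ m t (n + 1) + 10 * (n + 1 + 1) ^ 2 := rfl
  omega

lemma index_strictMono (φ m t : ℕ → ℕ) : StrictMono (index φ m t) :=
  strictMono_nat_of_lt_succ (index_lt_succ φ m t)

lemma radius_strictMono (φ m t : ℕ → ℕ) : StrictMono (radius φ m t) := by
  refine strictMono_nat_of_lt_succ fun n => ?_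
  have := radius_succ φ m t n
  have : index φ m t n = radius φ m t n + 10 * (n + 1) ^ 2 := rfl
  omega

lemma one_le_index (φ m t : ℕ → ℕ) (n : ℕ) : 1 ≤ index φ m t n := by
  have h1 : index φ m t n = radius φ m t n + 10 * (n + 1) ^ 2 := rfl
  have h2 : 1 ≤ (n + 1) ^ 2 := Nat.one_le_pow _ _ (Nat.succ_pos n)
  omega

lemma radius_add_le_step {φ m t : ℕ → ℕ} (hm : PhiIncreasing φ m) (ht : PhiIncreasing φ t)
    (n : ℕ) : radius φ m t n + 10 * (n + 1) ^ 2 ≤ step φ m t n := by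
  have h1 := one_le_index φ m t n
  change index φ m t n ≤ _
  unfold step alternate
  split_ifs
  · exact hm.le_apply h1
  · exact ht.le_apply h1

/-! ### The compact sets containing the translated discs -/

/-- The compact set handled at stage `n`: an annulus with a slot around the positive real axis for
even `n`, the part of an annulus in a right half-plane for odd `n`. -/
def obstacle (φ m t : ℕ → ℕ) (n : ℕ) : Set ℂ :=
  {z | (step φ m t n : ℝ) - n ≤ ‖z‖ ∧ ‖z‖ ≤ step φ m t n + φ (step φ m t n) + n ∧
    if Even n then z.re ≤ n ∨ 1 ≤ |z.im| else (step φ m t n : ℝ) - n ≤ z.re}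

lemma isCompact_obstacle (φ m t : ℕ → ℕ) (n : ℕ) : IsCompact (obstacle φ m t n) := by
  refine Metric.isCompact_of_isClosed_isBounded ?_ ?_
  · refine (isClosed_le continuous_const continuous_norm).inter
      ((isClosed_le continuous_norm continuous_const).inter ?_)
    change IsClosed {z : ℂ | if Even n then z.re ≤ n ∨ 1 ≤ |z.im| else
      (step φ m t n : ℝ) - n ≤ z.re}
    by_cases hn : Even n <;> simp only [hn, if_true, if_false]
    · exact (isClosed_le Complex.continuous_re continuous_const).union
        (isClosed_le continuous_const Complex.continuous_im.abs)
    · exact isClosed_le continuous_const Complex.continuous_re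
  · refine Metric.isBounded_closedBall (x := (0 : ℂ))
      (r := step φ m t n + φ (step φ m t n) + n) |>.subset fun z hz => ?_
    simpa using hz.2.1

lemma obstacle_annulus {φ m t : ℕ → ℕ} (hm : PhiIncreasing φ m) (ht : PhiIncreasing φ t)
    (n : ℕ) {z : ℂ} (hz : z ∈ obstacle φ m t n) :
    (radius φ m t n : ℝ) < ‖z‖ ∧ ‖z‖ < radius φ m t (n + 1) := by
  have h1 : (radius φ m t n : ℝ) + 10 * (n + 1) ^ 2 ≤ step φ m t n := by
    exact_mod_cast radius_add_le_step hm ht n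
  have h2 : (radius φ m t (n + 1) : ℝ) =
      index φ m t n + step φ m t n + φ (step φ m t n) + n + 1 := by
    exact_mod_cast radius_succ φ m t n
  have h3 : (0 : ℝ) ≤ index φ m t n := Nat.cast_nonneg _
  have h4 : (0 : ℝ) ≤ n := Nat.cast_nonneg _
  obtain ⟨h5, h6, -⟩ := hz
  constructor <;> nlinarith

lemma obstacle_free_ray {φ m t : ℕ → ℕ} (hm : PhiIncreasing φ m) (ht : PhiIncreasing φ t)
    (n : ℕ) {r : ℝ} (hr : 0 ≤ r) : (r : ℂ) * (-1) ^ n ∉ obstacle φ m t n := by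
  have h1 : (radius φ m t n : ℝ) + 10 * (n + 1) ^ 2 ≤ step φ m t n := by
    exact_mod_cast radius_add_le_step hm ht n
  have h3 : (0 : ℝ) ≤ radius φ m t n := Nat.cast_nonneg _
  have h4 : (0 : ℝ) ≤ n := Nat.cast_nonneg _
  rintro ⟨h5, -, h7⟩
  split_ifs at h7 with hn
  · simp only [hn.neg_one_pow, mul_one, Complex.norm_real, Real.norm_eq_abs, abs_of_nonneg hr,
      Complex.ofReal_re, Complex.ofReal_im, abs_zero] at h5 h7
    rcases h7 with h7 | h7
    · nlinarith
    · linarith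
  · simp only [(Nat.not_even_iff_odd.mp hn).neg_one_pow, mul_neg, mul_one, Complex.neg_re,
      Complex.ofReal_re] at h7
    nlinarith

/-- The translates relevant to the first sequence fall in the slotted annuli. -/
lemma mem_obstacle_even {φ m t : ℕ → ℕ} (hm : PhiIncreasing φ m) (ht : PhiIncreasing φ t)
    {j : ℕ} (hj : 1 ≤ j) {a w : ℂ} (ha : ‖a‖ = 1) (harc : OutsideArc (1 / (j : ℝ)) a)
    (hw : ‖w‖ ≤ j) {k : ℕ} (hk1 : step φ m t (2 * j) ≤ k)
    (hk2 : k ≤ step φ m t (2 * j) + φ (step φ m t (2 * j))) :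
    w + (k : ℂ) * a ∈ obstacle φ m t (2 * j) := by
  have h0 := radius_add_le_step hm ht (2 * j)
  have hk : 2 * (j : ℝ) * (j + 1) ≤ (k : ℝ) := by
    have : 2 * j * (j + 1) ≤ k := by nlinarith
    exact_mod_cast this
  have hk1' : (step φ m t (2 * j) : ℝ) ≤ k := by exact_mod_cast hk1
  have hk2' : (k : ℝ) ≤ step φ m t (2 * j) + φ (step φ m t (2 * j)) := by exact_mod_cast hk2
  have hnorm : ‖(k : ℂ) * a‖ = k := by simp [ha]
  have hj0 : (0 : ℝ) ≤ j := Nat.cast_nonneg _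
  refine ⟨?_, ?_, ?_⟩
  · have := norm_sub_le_norm_add ((k : ℂ) * a) w
    rw [add_comm, hnorm] at this
    push_cast
    linarith
  · have := norm_add_le w ((k : ℂ) * a)
    rw [hnorm] at this
    push_cast
    linarith
  · rw [if_pos (even_two_mul j)]
    have := avoid_positive_axis hj ha harc hw hk
    push_cast at this ⊢
    exact this.imp (fun h => by linarith) id

/-- The translates relevant to the second sequence fall in the half-annuli. -/
lemma mem_obstacle_odd {φ m t : ℕ → ℕ} {j : ℕ} {w : ℂ} (hw : ‖w‖ ≤ j) {k : ℕ}
    (hk1 : step φ m t (2 * j + 1) ≤ k)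
    (hk2 : k ≤ step φ m t (2 * j + 1) + φ (step φ m t (2 * j + 1))) :
    w + (k : ℂ) ∈ obstacle φ m t (2 * j + 1) := by
  have hk1' : (step φ m t (2 * j + 1) : ℝ) ≤ k := by exact_mod_cast hk1
  have hk2' : (k : ℝ) ≤ step φ m t (2 * j + 1) + φ (step φ m t (2 * j + 1)) := by
    exact_mod_cast hk2
  have hj0 : (0 : ℝ) ≤ j := Nat.cast_nonneg _
  have hre : (step φ m t (2 * j + 1) : ℝ) - ((2 * j + 1 : ℕ) : ℝ) ≤ (w + (k : ℂ)).re := by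
    have := (abs_le.mp ((Complex.abs_re_le_norm w).trans hw)).1
    simp only [Complex.add_re, Complex.natCast_re]
    push_cast
    linarith
  refine ⟨hre.trans (Complex.re_le_norm _), ?_, ?_⟩
  · have := norm_add_le w (k : ℂ)
    rw [Complex.norm_natCast] at this
    push_cast
    linarith
  · rwa [if_neg (by simp)]

/-- Lemma 3.5: given `φ`-increasing sequences `(m_k)` and `(t_k)`, there exist strictly
increasing sequences `(k_{1,s})` and `(k_{2,s})` such that for every `b > 0`, `ε > 0`,
`d ≥ 0` and `s ≥ 1` there is a polynomial `P` with `val(P) ≥ d`, `p₁(P) ≥ 1/2`,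
`p_j(e^{bk}T_a^k P) < ε` for `j ≤ s`, `a ∈ 𝕋` outside `{e^{iα} : |α| < 1/j}` and
`k ∈ [m_{k_{1,j}}, m_{k_{1,j}} + φ(m_{k_{1,j}})]`, and `p_j(e^{bk}T_1^k P) < ε` for
`j ≤ s` and `k ∈ [t_{k_{2,j}}, t_{k_{2,j}} + φ(t_{k_{2,j}})]`. -/
theorem stmt_8 (φ : ℕ → ℕ) (m t : ℕ → ℕ)
    (hm : PhiIncreasing φ m) (ht : PhiIncreasing φ t) :
    ∃ k1 k2 : ℕ → ℕ,
      StrictMono k1 ∧ StrictMono k2 ∧ (∀ s, 1 ≤ k1 s) ∧ (∀ s, 1 ≤ k2 s) ∧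
      ∀ b : ℝ, 0 < b → ∀ ε : ℝ, 0 < ε → ∀ d : ℕ, ∀ s : ℕ, 1 ≤ s →
        ∃ P : Polynomial ℂ,
          d ≤ P.natTrailingDegree ∧
          (1 : ℝ) / 2 ≤ pnorm 1 (fun z => P.eval z) ∧
          (∀ j : ℕ, 1 ≤ j → j ≤ s → ∀ a : ℂ, ‖a‖ = 1 → OutsideArc (1 / (j : ℝ)) a →
            ∀ k : ℕ, m (k1 j) ≤ k → k ≤ m (k1 j) + φ (m (k1 j)) →
              pnorm j (fun z => (Real.exp (b * k) : ℂ) * P.eval (z + (k : ℂ) * a)) < ε) ∧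
          (∀ j : ℕ, 1 ≤ j → j ≤ s →
            ∀ k : ℕ, t (k2 j) ≤ k → k ≤ t (k2 j) + φ (t (k2 j)) →
              pnorm j (fun z => (Real.exp (b * k) : ℂ) * P.eval (z + (k : ℂ))) < ε) := by
  refine ⟨fun j => index φ m t (2 * j), fun j => index φ m t (2 * j + 1), ?_, ?_,
    fun j => one_le_index φ m t _, fun j => one_le_index φ m t _, ?_⟩
  · exact fun i j hij => index_strictMono φ m t (by omega)
  · exact fun i j hij => index_strictMono φ m t (by omega)
  intro b hb ε hε d s hs
  have hm1 : ∀ j, m (index φ m t (2 * j)) = step φ m t (2 * j) := fun j => by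
    simp [step, alternate]
  have ht1 : ∀ j, t (index φ m t (2 * j + 1)) = step φ m t (2 * j + 1) := fun j => by
    simp [step, alternate]
  simp only [hm1, ht1]
  -- stages `2 * j` and `2 * j + 1` with `j ≤ s` are all below `N`
  set N := 2 * s + 2 with hN
  set R : ℝ := ((radius φ m t N : ℕ) : ℝ) with hR
  set K : Set ℂ := ⋃ n ∈ Finset.range N, obstacle φ m t n with hK
  have hKcomp : IsCompact K :=
    (Finset.range N).isCompact_biUnion fun n _ => isCompact_obstacle φ m t n
  have hmonoR : StrictMono fun n => (radius φ m t n : ℝ) := fun i j hij =>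
    Nat.cast_lt.mpr (radius_strictMono φ m t hij)
  have hunb : ¬ Bornology.IsBounded (connectedComponentIn Kᶜ (1 : ℂ)) := by
    have := unbounded_component (c := fun n => (radius φ m t n : ℝ)) (S := obstacle φ m t)
      (u := fun n => (-1) ^ n) (K := K) hmonoR (Nat.cast_nonneg _)
      (tendsto_natCast_atTop_atTop.comp (radius_strictMono φ m t).tendsto_atTop)
      (by simp) (fun n z hz => obstacle_annulus hm ht n hz)
      (fun n r hr => obstacle_free_ray hm ht n hr)
      (iUnion₂_subset fun n _ => subset_iUnion _ n)
    simpa [radius] using this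
  have hR1 : 1 ≤ R := by
    have h : 1 ≤ radius φ m t N := (radius_strictMono φ m t).monotone (Nat.zero_le N)
    exact Nat.one_le_cast.mpr h
  have hKn : ∀ n < N, ∀ z ∈ obstacle φ m t n, z ∈ K ∧ ‖z‖ ≤ R := fun n hn z hz =>
    ⟨mem_biUnion (Finset.mem_coe.mpr (Finset.mem_range.mpr hn)) hz,
      (obstacle_annulus hm ht n hz).2.le.trans (hmonoR.monotone hn)⟩
  have hkR : ∀ n < N, ∀ k ≤ step φ m t n + φ (step φ m t n), (k : ℝ) ≤ R := fun n hn k hk => by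
    have h1 := radius_succ φ m t n
    have h2 := (radius_strictMono φ m t).monotone hn
    have : k ≤ radius φ m t N := by simp only [Nat.succ_eq_add_one] at h2; omega
    exact Nat.cast_le.mpr this
  obtain ⟨q, hq1, hqK⟩ := exists_polynomial_separating hKcomp hunb
    (δ := ε / (2 * (Real.exp (b * R) * R ^ d))) (by positivity)
  have hsmall : ∀ n < N, ∀ (j : ℕ) (v : ℂ) (k : ℕ), k ≤ step φ m t n + φ (step φ m t n) →
      (∀ w : ℂ, ‖w‖ ≤ j → w + v ∈ obstacle φ m t n) →
      pnorm j (fun z => (Real.exp (b * k) : ℂ) * (q * Polynomial.X ^ d).eval (z + v)) < ε := by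
    intro n hn j v k hk hv
    have hle : pnorm j (fun z => (Real.exp (b * k) : ℂ) *
        (q * Polynomial.X ^ d).eval (z + v)) ≤ ε / 2 := by
      refine csSup_le ((Metric.nonempty_closedBall.mpr (Nat.cast_nonneg j)).image _) ?_
      rintro _ ⟨w, hw, rfl⟩
      obtain ⟨h1, h2⟩ := hKn n hn _ (hv w (by simpa using hw))
      have h3 := (hqK _ h1).le
      have h4 : Real.exp (b * k) ≤ Real.exp (b * R) :=
        Real.exp_le_exp.mpr (mul_le_mul_of_nonneg_left (hkR n hn k hk) hb.le)
      have h5 : ‖w + v‖ ^ d ≤ R ^ d := pow_le_pow_left₀ (norm_nonneg _) h2 d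
      simp only [Polynomial.eval_mul, Polynomial.eval_pow, Polynomial.eval_X, norm_mul, norm_pow,
        Complex.norm_real, Real.norm_eq_abs, Real.abs_exp]
      calc Real.exp (b * k) * (‖q.eval (w + v)‖ * ‖w + v‖ ^ d)
          ≤ Real.exp (b * R) * (ε / (2 * (Real.exp (b * R) * R ^ d)) * R ^ d) := by gcongr
        _ = ε / 2 := by field_simp
    linarith
  refine ⟨q * Polynomial.X ^ d, ?_, ?_, ?_, ?_⟩
  · rw [Polynomial.natTrailingDegree_mul_X_pow (by rintro rfl; simp at hq1)]
    omega
  · have hbdd : BddAbove ((fun z : ℂ => ‖(q * Polynomial.X ^ d).eval z‖) ''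
        Metric.closedBall (0 : ℂ) 1) :=
      ((isCompact_closedBall (0 : ℂ) 1).image (by fun_prop)).bddAbove
    have h1 : ‖(q * Polynomial.X ^ d).eval 1‖ ≤ pnorm 1 (fun z => (q * Polynomial.X ^ d).eval z) :=
      le_csSup hbdd ⟨1, by simp, rfl⟩
    have h2 : (q * Polynomial.X ^ d).eval 1 = 1 := by simp [hq1]
    rw [h2, norm_one] at h1
    linarith
  · intro j hj hjs a ha harc k hk1 hk2
    exact hsmall (2 * j) (by omega) j _ k hk2 fun w hw =>
      mem_obstacle_even hm ht hj ha harc hw hk1 hk2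
  · intro j hj hjs k hk1 hk2
    exact hsmall (2 * j + 1) (by omega) j _ k hk2 fun w hw => mem_obstacle_odd hw hk1 hk2
end
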